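/- arXiv:1709.04342 — 3 statements merged into one kernel-verified Lean document; each statement's English description precedes it below -/
import Mathlib

section
/- In the same normalized exponential family setting, suppose for each n a subset γ_n ⊆ {1,…,p_n} is given, with G_n = θ*_n − (θ*_n)_{γ_n} satisfying ‖G_n‖ → 0 as n → ∞, and suppose there is a constant C independent of n such that A_n is finite in a neighborhood of the segment joining θ*_n and (θ*_n)_{γ_n}, and for every θ on that segment and every unit vector a ∈ ℝ^{p_n}, |E[(aᵀV_θ)³]| ≤ C and E[(aᵀV_θ)⁴] ≤ C. Then |A_n((θ*_n)_{γ_n}) − A_n(θ*_n)| = ‖G_n‖²/2 + o(‖G_n‖²) as n → ∞. -/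
open MeasureTheory ProbabilityTheory Filter

/-- Cumulant function `A(θ) = log ∫ exp(θᵀy) dν(y)` of a natural exponential family. -/
noncomputable def cumulant {p : ℕ} (ν : Measure (Fin p → ℝ)) (θ : Fin p → ℝ) : ℝ :=
  Real.log (∫ y, Real.exp (∑ j, θ j * y j) ∂ν)

/-- The exponential-family distribution with density `exp(θᵀy − A(θ))` w.r.t. `ν`. -/
noncomputable def expFam {p : ℕ} (ν : Measure (Fin p → ℝ)) (θ : Fin p → ℝ) :
    Measure (Fin p → ℝ) :=
  ν.withDensity fun y => ENNReal.ofReal (Real.exp ((∑ j, θ j * y j) - cumulant ν θ))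

/-- Mean vector of the exponential-family distribution with parameter `θ`. -/
noncomputable def expFamMean {p : ℕ} (ν : Measure (Fin p → ℝ)) (θ : Fin p → ℝ)
    (j : Fin p) : ℝ :=
  ∫ y, y j ∂(expFam ν θ)

/-!
Along the segment from `θ` to `θ' = θ + u`, the increment of the cumulant function is the cumulant
generating function of the linear functional `y ↦ uᵀy` under the distribution with parameter `θ`.
Exponential tilting moves the parameter along the segment, so the first three derivatives of that
function are the mean, the variance and the third central moment of `uᵀY` at the current parameter.
Taylor's theorem with Lagrange remainder, together with the normalization at `θ`, then gives
`A(θ') - A(θ) = ‖u‖² / 2 + κ / 6`, where `κ` is a third central moment of `uᵀY` somewhere on the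
segment; by homogeneity `|κ| ≤ C ‖u‖³`, which is `o(‖u‖²)`.
-/

section CumulantGeneratingFunction

variable {Ω : Type*} {mΩ : MeasurableSpace Ω} {μ : Measure Ω} {X : Ω → ℝ} {t v : ℝ}

lemma centralMoment_three [IsProbabilityMeasure μ] (hX : MemLp X 3 μ) :
    centralMoment X 3 μ = μ[X ^ 3] - 3 * μ[X] * μ[X ^ 2] + 2 * μ[X] ^ 3 := by
  have h1 : Integrable X μ := hX.integrable (by norm_num)
  have h2 : Integrable (fun ω ↦ X ω ^ 2) μ :=
    (hX.mono_exponent (by norm_num : (2 : ENNReal) ≤ 3)).integrable_sq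
  have h3 : Integrable (fun ω ↦ X ω ^ 3) μ := by
    refine (integrable_norm_iff (hX.aestronglyMeasurable.pow 3)).1 ?_
    simpa [norm_pow] using hX.integrable_norm_pow (by norm_num)
  set c := μ[X]
  calc centralMoment X 3 μ
    _ = ∫ ω, X ω ^ 3 - 3 * c * X ω ^ 2 + (3 * c ^ 2 * X ω - c ^ 3) ∂μ := by
      simp only [centralMoment, Pi.pow_apply, Pi.sub_apply]
      congr with ω
      ring
    _ = μ[X ^ 3] - 3 * c * μ[X ^ 2] + (3 * c ^ 2 * c - c ^ 3) := by
      rw [integral_add (by fun_prop) (by fun_prop), integral_sub h3 (by fun_prop),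
        integral_sub (by fun_prop) (by fun_prop), integral_const_mul, integral_const_mul]
      simp [c]
    _ = _ := by ring

lemma integral_pow_tilted_mul (X : Ω → ℝ) (μ : Measure Ω) (t : ℝ) (n : ℕ) :
    (μ.tilted (t * X ·))[X ^ n] = μ[fun ω ↦ X ω ^ n * Real.exp (t * X ω)] / mgf X μ t := by
  simp only [integral_tilted_mul_eq_mgf, ← integral_div, smul_eq_mul, Pi.pow_apply]
  congr with ω
  ring

lemma iteratedDeriv_three_cgf (hv : v ∈ interior (integrableExpSet X μ)) :
    iteratedDeriv 3 (cgf X μ) v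
      = μ[fun ω ↦ X ω ^ 3 * Real.exp (v * X ω)] / mgf X μ v
        - 3 * deriv (cgf X μ) v * (μ[fun ω ↦ X ω ^ 2 * Real.exp (v * X ω)] / mgf X μ v)
        + 2 * deriv (cgf X μ) v ^ 3 := by
  obtain rfl | hμ := eq_or_ne μ 0
  · simp
  have hmgf : mgf X μ v ≠ 0 := (mgf_pos' hμ (interior_subset (s := integrableExpSet X μ) hv)).ne'
  have hmgf' : HasDerivAt (mgf X μ) (deriv (cgf X μ) v * mgf X μ v) v := by
    rw [deriv_cgf hv, div_mul_cancel₀ _ hmgf]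
    exact hasDerivAt_mgf hv
  have hcgf' : HasDerivAt (deriv (cgf X μ)) (iteratedDeriv 2 (cgf X μ) v) v := by
    rw [iteratedDeriv_succ, iteratedDeriv_one]
    exact (analyticAt_cgf hv).deriv.differentiableAt.hasDerivAt
  have hcgf'' : iteratedDeriv 2 (cgf X μ) =ᶠ[nhds v] fun u ↦
      μ[fun ω ↦ X ω ^ 2 * Real.exp (u * X ω)] / mgf X μ u - deriv (cgf X μ) u ^ 2 := by
    filter_upwards [isOpen_interior.eventually_mem hv] with u hu using iteratedDeriv_two_cgf hu
  have hmoment : HasDerivAt (fun u ↦ μ[fun ω ↦ X ω ^ 2 * Real.exp (u * X ω)])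
      μ[fun ω ↦ X ω ^ 3 * Real.exp (v * X ω)] v := hasDerivAt_integral_pow_mul_exp_real hv 2
  rw [iteratedDeriv_succ, hcgf''.deriv_eq,
    ((hmoment.fun_div hmgf' hmgf).fun_sub (hcgf'.fun_pow 2)).deriv,
    iteratedDeriv_two_cgf hv]
  simp only [Nat.cast_ofNat, Nat.reduceSub, pow_one]
  rw [← mul_assoc, ← sub_mul, sq (mgf X μ v), mul_div_mul_right _ _ hmgf]
  ring

lemma centralMoment_three_tilted_mul (ht : t ∈ interior (integrableExpSet X μ)) :
    centralMoment X 3 (μ.tilted (t * X ·)) = iteratedDeriv 3 (cgf X μ) t := by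
  obtain rfl | hμ := eq_zero_or_neZero μ
  · simp [centralMoment_zero_measure]
  have : IsProbabilityMeasure (μ.tilted (t * X ·)) :=
    isProbabilityMeasure_tilted (interior_subset (s := integrableExpSet X μ) ht)
  rw [centralMoment_three (memLp_tilted_mul ht 3), integral_pow_tilted_mul,
    integral_pow_tilted_mul, integral_tilted_mul_self ht, iteratedDeriv_three_cgf ht]

lemma exists_cgf_eq_add_centralMoment_three_mul [IsProbabilityMeasure μ] (ht : 0 < t)
    (hs : Set.Icc 0 t ⊆ interior (integrableExpSet X μ)) :
    ∃ u ∈ Set.Ioo 0 t, cgf X μ t = μ[X] * t + Var[X; μ] * t ^ 2 / 2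
      + centralMoment X 3 (μ.tilted (u * X ·)) * t ^ 3 / 6 := by
  have h0 : (0 : ℝ) ∈ interior (integrableExpSet X μ) := hs ⟨le_rfl, ht.le⟩
  have hunique : UniqueDiffOn ℝ (Set.Icc 0 t) := uniqueDiffOn_Icc ht
  have hderiv (n : ℕ) : iteratedDerivWithin n (cgf X μ) (Set.Icc 0 t) 0
      = iteratedDeriv n (cgf X μ) 0 :=
    iteratedDerivWithin_eq_iteratedDeriv hunique (analyticAt_cgf h0).contDiffAt ⟨le_rfl, ht.le⟩
  have hderiv1 : iteratedDeriv 1 (cgf X μ) 0 = μ[X] := by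
    simp [iteratedDeriv_one, deriv_cgf_zero h0]
  have hderiv2 : iteratedDeriv 2 (cgf X μ) 0 = Var[X; μ] := by
    simp [← variance_tilted_mul h0]
  have hsmooth : ContDiffOn ℝ (2 + 1) (cgf X μ) (Set.uIcc 0 t) := by
    rw [Set.uIcc_of_lt ht]
    exact (analyticOn_cgf.mono hs).contDiffOn hunique
  obtain ⟨u, hu, htaylor⟩ := taylor_mean_remainder_lagrange_iteratedDeriv ht.ne hsmooth
  rw [Set.uIoo_of_lt ht] at hu
  refine ⟨u, hu, ?_⟩
  rw [centralMoment_three_tilted_mul (hs (Set.Ioo_subset_Icc_self hu))]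
  simp only [Set.uIcc_of_lt ht, taylorWithinEval_succ, taylor_within_zero_eval, hderiv, zero_add,
    hderiv1, hderiv2, cgf_zero, Nat.reduceAdd, sub_zero, smul_eq_mul, Nat.factorial,
    Nat.cast_zero, Nat.cast_one] at htaylor
  linear_combination htaylor

end CumulantGeneratingFunction

section LinearFunctional

variable {ι : Type*} [Fintype ι] {μ : Measure (ι → ℝ)}

lemma integral_dotProduct (h : ∀ j, Integrable (fun y ↦ y j) μ) (u : ι → ℝ) :
    ∫ y, u ⬝ᵥ y ∂μ = u ⬝ᵥ fun j ↦ ∫ y, y j ∂μ := by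
  simp only [dotProduct]
  rw [integral_finsetSum _ fun j _ ↦ (h j).const_mul _]
  simp only [integral_const_mul]

lemma integral_dotProduct_sq (h : ∀ j, MemLp (fun y ↦ y j) 2 μ) (u : ι → ℝ) :
    ∫ y, (u ⬝ᵥ y) ^ 2 ∂μ = ∑ j, ∑ l, u j * u l * ∫ y, y j * y l ∂μ := by
  have hint (j l : ι) : Integrable (fun y ↦ u j * u l * (y j * y l)) μ :=
    ((h j).integrable_mul (h l)).const_mul _
  simp only [dotProduct, sq, Finset.sum_mul_sum, mul_mul_mul_comm (u _)]
  rw [integral_finsetSum _ fun j _ ↦ integrable_finsetSum _ fun l _ ↦ hint j l]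
  simp_rw [integral_finsetSum _ fun l _ ↦ hint _ l, integral_const_mul]

lemma subset_interior_of_sum_sq_lt {s t : Set (ι → ℝ)} {ε : ℝ} (hε : 0 < ε)
    (h : ∀ z : ι → ℝ, (∃ x ∈ t, ∑ j, (z j - x j) ^ 2 < ε ^ 2) → z ∈ s) : t ⊆ interior s := by
  intro x hx
  have hcont : Continuous fun z : ι → ℝ ↦ ∑ j, (z j - x j) ^ 2 := by fun_prop
  have hnear : ∀ᶠ z in nhds x, ∑ j, (z j - x j) ^ 2 < ε ^ 2 :=
    hcont.continuousAt.eventually_lt continuousAt_const (by simpa using pow_pos hε 2)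
  exact mem_interior_iff_mem_nhds.2 (hnear.mono fun z hz ↦ h z ⟨x, hx, hz⟩)

lemma abs_integral_dotProduct_pow_le {Ω : Type*} {mΩ : MeasurableSpace Ω} {P : Measure Ω}
    {V : Ω → ι → ℝ} {n : ℕ} (hn : n ≠ 0) {C : ℝ}
    (hC : ∀ a : ι → ℝ, ∑ j, a j ^ 2 = 1 → |∫ ω, (a ⬝ᵥ V ω) ^ n ∂P| ≤ C) (u : ι → ℝ) :
    |∫ ω, (u ⬝ᵥ V ω) ^ n ∂P| ≤ C * √(∑ j, u j ^ 2) ^ n := by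
  obtain rfl | hu := eq_or_ne u 0
  · simp [hn]
  have hpos : 0 < ∑ j, u j ^ 2 := by
    obtain ⟨j, hj⟩ := Function.ne_iff.1 hu
    exact Finset.sum_pos' (fun _ _ ↦ sq_nonneg _) ⟨j, Finset.mem_univ j, sq_pos_of_ne_zero hj⟩
  set r := √(∑ j, u j ^ 2)
  have hr : 0 < r := Real.sqrt_pos.2 hpos
  have hunit : ∑ j, (r⁻¹ • u) j ^ 2 = 1 := by
    simp only [Pi.smul_apply, smul_eq_mul, mul_pow, ← Finset.mul_sum]
    rw [← Real.sq_sqrt hpos.le, ← mul_pow, inv_mul_cancel₀ hr.ne', one_pow]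
  calc |∫ ω, (u ⬝ᵥ V ω) ^ n ∂P|
    _ = |(∫ ω, ((r⁻¹ • u) ⬝ᵥ V ω) ^ n ∂P) * r ^ n| := by
      rw [← integral_mul_const]
      congr with ω
      rw [smul_dotProduct, smul_eq_mul, ← mul_pow, mul_right_comm, inv_mul_cancel₀ hr.ne', one_mul]
    _ = |∫ ω, ((r⁻¹ • u) ⬝ᵥ V ω) ^ n ∂P| * r ^ n := by rw [abs_mul, abs_of_pos (pow_pos hr n)]
    _ ≤ C * r ^ n := by gcongr; exact hC _ hunit

end LinearFunctional

section ExponentialFamily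

variable {p : ℕ} {ν : Measure (Fin p → ℝ)} {θ θ' u : Fin p → ℝ} {t C : ℝ}

/-- The natural parameter space of the exponential family generated by `ν`: the parameters at
which the cumulant function is finite. -/
def naturalParameterSpace (ν : Measure (Fin p → ℝ)) : Set (Fin p → ℝ) :=
  {θ | Integrable (fun y ↦ Real.exp (θ ⬝ᵥ y)) ν}

/-- The exponential family generated by `ν` is normalized at `θ`: mean zero and identity
covariance. As the mean vanishes, the covariance is encoded by the raw second moments. -/
structure IsNormalizedAt (ν : Measure (Fin p → ℝ)) (θ : Fin p → ℝ) : Prop where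
  integral_apply (j : Fin p) : ∫ y, y j ∂(expFam ν θ) = 0
  integral_mul (j l : Fin p) : ∫ y, y j * y l ∂(expFam ν θ) = if j = l then 1 else 0

lemma exp_dotProduct_add_smul (θ u y : Fin p → ℝ) (t : ℝ) :
    Real.exp ((θ + t • u) ⬝ᵥ y) = Real.exp (θ ⬝ᵥ y) * Real.exp (t * (u ⬝ᵥ y)) := by
  rw [add_dotProduct, smul_dotProduct, smul_eq_mul, Real.exp_add]

lemma expFam_eq_tilted [NeZero ν] (hθ : θ ∈ naturalParameterSpace ν) :
    expFam ν θ = ν.tilted (θ ⬝ᵥ ·) := by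
  have hpos : 0 < ∫ y, Real.exp (θ ⬝ᵥ y) ∂ν := integral_exp_pos hθ
  have hcumulant : Real.exp (cumulant ν θ) = ∫ y, Real.exp (θ ⬝ᵥ y) ∂ν := Real.exp_log hpos
  simp only [expFam, Measure.tilted, Real.exp_sub, hcumulant]
  rfl

lemma isProbabilityMeasure_expFam [NeZero ν] (hθ : θ ∈ naturalParameterSpace ν) :
    IsProbabilityMeasure (expFam ν θ) := by
  rw [expFam_eq_tilted hθ]
  exact isProbabilityMeasure_tilted hθ

lemma expFam_tilted [NeZero ν] (hθ : θ ∈ naturalParameterSpace ν)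
    (ht : θ + t • u ∈ naturalParameterSpace ν) :
    (expFam ν θ).tilted (fun y ↦ t * (u ⬝ᵥ y)) = expFam ν (θ + t • u) := by
  rw [expFam_eq_tilted hθ, expFam_eq_tilted ht, tilted_tilted hθ]
  congr with y
  simp [add_dotProduct]

lemma cgf_expFam [NeZero ν] (hθ : θ ∈ naturalParameterSpace ν)
    (ht : θ + t • u ∈ naturalParameterSpace ν) :
    cgf (u ⬝ᵥ ·) (expFam ν θ) t = cumulant ν (θ + t • u) - cumulant ν θ := by
  have hmgf : mgf (u ⬝ᵥ ·) (expFam ν θ) t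
      = (∫ y, Real.exp ((θ + t • u) ⬝ᵥ y) ∂ν) / ∫ y, Real.exp (θ ⬝ᵥ y) ∂ν := by
    rw [mgf, expFam_eq_tilted hθ, integral_exp_tilted]
    simp only [Pi.add_apply, Real.exp_add, exp_dotProduct_add_smul]
  rw [cgf, hmgf, Real.log_div (integral_exp_pos ht).ne' (integral_exp_pos hθ).ne']
  rfl

lemma mem_interior_integrableExpSet_expFam [NeZero ν] (hθ : θ ∈ naturalParameterSpace ν)
    (ht : θ + t • u ∈ interior (naturalParameterSpace ν)) :
    t ∈ interior (integrableExpSet (u ⬝ᵥ ·) (expFam ν θ)) := by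
  have hcont : Continuous fun s : ℝ ↦ θ + s • u := by fun_prop
  have hsub : (fun s : ℝ ↦ θ + s • u) ⁻¹' naturalParameterSpace ν
      ⊆ integrableExpSet (u ⬝ᵥ ·) (expFam ν θ) := fun s hs ↦ by
    have hs : Integrable (fun y ↦ Real.exp ((θ + s • u) ⬝ᵥ y)) ν := hs
    suffices Integrable (fun y ↦ Real.exp (s * (u ⬝ᵥ y))) (expFam ν θ) from this
    rw [expFam_eq_tilted hθ, integrable_tilted_iff hθ]
    simpa only [smul_eq_mul, ← exp_dotProduct_add_smul] using hs
  exact interior_mono hsub (preimage_interior_subset_interior_preimage hcont ht)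

lemma memLp_dotProduct_expFam [NeZero ν] (hθ : θ ∈ interior (naturalParameterSpace ν))
    (u : Fin p → ℝ) (q : NNReal) : MemLp (u ⬝ᵥ ·) q (expFam ν θ) :=
  memLp_of_mem_interior_integrableExpSet
    (mem_interior_integrableExpSet_expFam (t := 0) (interior_subset hθ) (by simpa using hθ)) q

lemma memLp_apply_expFam [NeZero ν] (hθ : θ ∈ interior (naturalParameterSpace ν))
    (j : Fin p) (q : NNReal) : MemLp (fun y ↦ y j) q (expFam ν θ) := by
  simpa using memLp_dotProduct_expFam hθ (Pi.single j 1) q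

lemma integral_dotProduct_expFam [NeZero ν] (hθ : θ ∈ interior (naturalParameterSpace ν))
    (u : Fin p → ℝ) : ∫ y, u ⬝ᵥ y ∂(expFam ν θ) = u ⬝ᵥ expFamMean ν θ :=
  have := isProbabilityMeasure_expFam (interior_subset hθ)
  integral_dotProduct (fun j ↦ (memLp_apply_expFam hθ j 1).integrable (by simp)) u

lemma exists_cumulant_eq_add_centralMoment_three [NeZero ν]
    (hseg : segment ℝ θ θ' ⊆ interior (naturalParameterSpace ν)) :
    ∃ η ∈ segment ℝ θ θ', cumulant ν θ' = cumulant ν θ + (θ' - θ) ⬝ᵥ expFamMean ν θ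
      + Var[((θ' - θ) ⬝ᵥ ·); expFam ν θ] / 2
      + centralMoment ((θ' - θ) ⬝ᵥ ·) 3 (expFam ν η) / 6 := by
  have hθ : θ ∈ interior (naturalParameterSpace ν) := hseg (left_mem_segment ℝ θ θ')
  have hθ' : θ' ∈ interior (naturalParameterSpace ν) := hseg (right_mem_segment ℝ θ θ')
  have hline {t : ℝ} (ht : t ∈ Set.Icc (0 : ℝ) 1) : θ + t • (θ' - θ) ∈ segment ℝ θ θ' := by
    rw [segment_eq_image']
    exact Set.mem_image_of_mem _ ht
  have := isProbabilityMeasure_expFam (interior_subset hθ)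
  obtain ⟨t, ht, hcgf⟩ := exists_cgf_eq_add_centralMoment_three_mul one_pos fun t ht ↦
    mem_interior_integrableExpSet_expFam (interior_subset hθ) (hseg (hline ht))
  have htseg := hline (Set.Ioo_subset_Icc_self ht)
  refine ⟨θ + t • (θ' - θ), htseg, ?_⟩
  rw [cgf_expFam (interior_subset hθ) (by simpa using interior_subset hθ'),
    integral_dotProduct_expFam hθ,
    expFam_tilted (interior_subset hθ) (interior_subset (hseg htseg))] at hcgf
  simp only [one_smul, add_sub_cancel, one_pow, mul_one] at hcgf
  linarith

lemma IsNormalizedAt.expFamMean_eq_zero (h : IsNormalizedAt ν θ) : expFamMean ν θ = 0 :=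
  funext h.integral_apply

lemma IsNormalizedAt.variance_dotProduct [NeZero ν] (h : IsNormalizedAt ν θ)
    (hθ : θ ∈ interior (naturalParameterSpace ν)) (u : Fin p → ℝ) :
    Var[(u ⬝ᵥ ·); expFam ν θ] = ∑ j, u j ^ 2 := by
  rw [variance_of_integral_eq_zero (memLp_dotProduct_expFam hθ u 1).aemeasurable
      (by rw [integral_dotProduct_expFam hθ, h.expFamMean_eq_zero, dotProduct_zero]),
    integral_dotProduct_sq fun j ↦ memLp_apply_expFam hθ j 2]
  simp [h.integral_mul, sq]

lemma centralMoment_dotProduct_expFam [NeZero ν] (hθ : θ ∈ interior (naturalParameterSpace ν))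
    (u : Fin p → ℝ) (n : ℕ) : centralMoment (u ⬝ᵥ ·) n (expFam ν θ)
      = ∫ y, (u ⬝ᵥ (y - expFamMean ν θ)) ^ n ∂(expFam ν θ) := by
  simp only [centralMoment, Pi.pow_apply, Pi.sub_apply, integral_dotProduct_expFam hθ,
    dotProduct_sub]

lemma IsNormalizedAt.abs_cumulant_sub_sub_half_le [NeZero ν] (h : IsNormalizedAt ν θ)
    (hseg : segment ℝ θ θ' ⊆ interior (naturalParameterSpace ν))
    (hC : ∀ η ∈ segment ℝ θ θ', ∀ a : Fin p → ℝ, ∑ j, a j ^ 2 = 1 →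
      |∫ y, (a ⬝ᵥ (y - expFamMean ν η)) ^ 3 ∂(expFam ν η)| ≤ C) :
    |cumulant ν θ' - cumulant ν θ - (∑ j, (θ j - θ' j) ^ 2) / 2|
      ≤ C / 6 * √(∑ j, (θ j - θ' j) ^ 2) ^ 3 := by
  obtain ⟨η, hη, htaylor⟩ := exists_cumulant_eq_add_centralMoment_three hseg
  have hbound := abs_integral_dotProduct_pow_le three_ne_zero (hC η hη) (θ' - θ)
  rw [centralMoment_dotProduct_expFam (hseg hη), h.expFamMean_eq_zero, dotProduct_zero,
    h.variance_dotProduct (hseg (left_mem_segment ℝ θ θ'))] at htaylor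
  simp only [Pi.sub_apply, sub_sq_comm (θ' _)] at htaylor hbound
  rw [abs_le] at hbound ⊢
  constructor <;> linarith

end ExponentialFamily

lemma isLittleO_abs_sub_of_nonneg {α : Type*} {l : Filter α} {f g h : α → ℝ} (hg : 0 ≤ g)
    (hfg : (fun x ↦ f x - g x) =o[l] h) : (fun x ↦ |f x| - g x) =o[l] h := by
  refine (Asymptotics.IsBigO.of_bound' (.of_forall fun x ↦ ?_)).trans_isLittleO hfg
  calc ‖|f x| - g x‖
    _ = |(|f x| - |g x|)| := by rw [Real.norm_eq_abs, abs_of_nonneg (hg x)]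
    _ ≤ |f x - g x| := abs_abs_sub_abs_le (f x) (g x)

theorem cumulant_second_order_approx_general {α : Type*} {l : Filter α} {C : ℝ} {p : α → ℕ}
    {ν : ∀ i, Measure (Fin (p i) → ℝ)} [∀ i, NeZero (ν i)] {θ θ' : ∀ i, Fin (p i) → ℝ}
    (hnormalized : ∀ i, IsNormalizedAt (ν i) (θ i))
    (hseg : ∀ i, segment ℝ (θ i) (θ' i) ⊆ interior (naturalParameterSpace (ν i)))
    (hlim : Tendsto (fun i ↦ √(∑ j, (θ i j - θ' i j) ^ 2)) l (nhds 0))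
    (hC : ∀ i, ∀ η ∈ segment ℝ (θ i) (θ' i), ∀ a : Fin (p i) → ℝ, ∑ j, a j ^ 2 = 1 →
      |∫ y, (a ⬝ᵥ (y - expFamMean (ν i) η)) ^ 3 ∂(expFam (ν i) η)| ≤ C) :
    (fun i ↦ cumulant (ν i) (θ' i) - cumulant (ν i) (θ i) - (∑ j, (θ i j - θ' i j) ^ 2) / 2)
      =o[l] fun i ↦ ∑ j, (θ i j - θ' i j) ^ 2 := by
  have hcubic : (fun i ↦ cumulant (ν i) (θ' i) - cumulant (ν i) (θ i)
      - (∑ j, (θ i j - θ' i j) ^ 2) / 2) =O[l] fun i ↦ √(∑ j, (θ i j - θ' i j) ^ 2) ^ 3 :=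
    .of_bound (C / 6) <| .of_forall fun i ↦ by
      rw [Real.norm_eq_abs, Real.norm_of_nonneg (by positivity)]
      exact (hnormalized i).abs_cumulant_sub_sub_half_le (hseg i) (hC i)
  have hsq (i : α) : √(∑ j, (θ i j - θ' i j) ^ 2) ^ 2 = ∑ j, (θ i j - θ' i j) ^ 2 :=
    Real.sq_sqrt (by positivity)
  simpa only [Function.comp_def, hsq] using
    hcubic.trans_isLittleO ((Asymptotics.isLittleO_pow_pow (by norm_num : 2 < 3)).comp_tendsto hlim)

lemma neZero_of_integral_pos {Ω : Type*} {mΩ : MeasurableSpace Ω} {μ : Measure Ω} {f : Ω → ℝ}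
    (h : 0 < ∫ ω, f ω ∂μ) : NeZero μ :=
  ⟨by rintro rfl; simp at h⟩

/-- **Lemma 2**: in the normalized exponential family setting, if
`G_n = θ*_n − (θ*_n)_{γ_n} → 0`, the cumulant function is finite near the segment
joining `θ*_n` and `(θ*_n)_{γ_n}`, and the third and fourth directional moments of the
centered variables are bounded along that segment, then
`|A_n((θ*_n)_{γ_n}) − A_n(θ*_n)| = ‖G_n‖²/2 + o(‖G_n‖²)`. -/
theorem cumulant_second_order_approx
    (C : ℝ) (hC : 0 < C)
    (p : ℕ → ℕ)
    (ν : ∀ n, Measure (Fin (p n) → ℝ)) (hν : ∀ n, SigmaFinite (ν n))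
    (θstar : ∀ n, Fin (p n) → ℝ)
    -- normalization at `θ*`: well-defined cumulant, mean zero, identity covariance
    (hA0 : ∀ n, Integrable (fun y => Real.exp (∑ j, θstar n j * y j)) (ν n) ∧
      0 < ∫ y, Real.exp (∑ j, θstar n j * y j) ∂(ν n))
    (hmean0 : ∀ n j, ∫ y, y j ∂(expFam (ν n) (θstar n)) = 0)
    (hcov : ∀ n j l, ∫ y, y j * y l ∂(expFam (ν n) (θstar n))
      = if j = l then (1 : ℝ) else 0)
    -- the models, the truncated parameters `(θ*)_γ`, and `G_n = θ* − (θ*)_γ`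
    (γ : ∀ n, Finset (Fin (p n)))
    (θγ : ∀ n, Fin (p n) → ℝ)
    (hθγ : ∀ n j, θγ n j = if j ∈ γ n then θstar n j else 0)
    (G : ∀ n, Fin (p n) → ℝ) (hGdef : ∀ n j, G n j = θstar n j - θγ n j)
    (hG0 : Tendsto (fun n => Real.sqrt (∑ j, (G n j) ^ 2)) atTop (nhds 0))
    -- `A_n` is finite in a neighborhood of the segment joining `θ*` and `(θ*)_γ`
    (hAfin : ∀ n, ∃ ε : ℝ, 0 < ε ∧ ∀ θ : Fin (p n) → ℝ,
      (∃ s ∈ segment ℝ (θstar n) (θγ n), ∑ j, (θ j - s j) ^ 2 < ε ^ 2) →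
      Integrable (fun y => Real.exp (∑ j, θ j * y j)) (ν n) ∧
        0 < ∫ y, Real.exp (∑ j, θ j * y j) ∂(ν n))
    -- bounded third and fourth directional moments of `V_θ` along the segment
    (hm3 : ∀ n, ∀ θ ∈ segment ℝ (θstar n) (θγ n), ∀ a : Fin (p n) → ℝ,
      (∑ j, (a j) ^ 2) = 1 →
      |∫ y, (∑ j, a j * (y j - expFamMean (ν n) θ j)) ^ 3 ∂(expFam (ν n) θ)| ≤ C)
    (hm4 : ∀ n, ∀ θ ∈ segment ℝ (θstar n) (θγ n), ∀ a : Fin (p n) → ℝ,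
      (∑ j, (a j) ^ 2) = 1 →
      ∫ y, (∑ j, a j * (y j - expFamMean (ν n) θ j)) ^ 4 ∂(expFam (ν n) θ) ≤ C) :
    Tendsto
      (fun n =>
        (|cumulant (ν n) (θγ n) - cumulant (ν n) (θstar n)|
            - (∑ j, (G n j) ^ 2) / 2)
          / (∑ j, (G n j) ^ 2))
      atTop (nhds 0) := by
  obtain rfl : G = fun n j ↦ θstar n j - θγ n j := funext₂ hGdef
  have (n : ℕ) : NeZero (ν n) := neZero_of_integral_pos (hA0 n).2
  have hseg (n : ℕ) : segment ℝ (θstar n) (θγ n) ⊆ interior (naturalParameterSpace (ν n)) :=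
    have ⟨_, hε, hfin⟩ := hAfin n
    subset_interior_of_sum_sq_lt hε fun θ hθ ↦ (hfin θ hθ).1
  exact (isLittleO_abs_sub_of_nonneg (fun n ↦ by positivity) <|
    cumulant_second_order_approx_general (fun n ↦ ⟨hmean0 n, hcov n⟩) hseg hG0
      hm3).tendsto_div_nhds_zero
end

section
/- Let (p_n) be positive integers with p_n → ∞ and p_n = o(n^{2/3}). For each n, let Y_1, …, Y_n be i.i.d. random vectors in ℝ^{p_n} with E[Y_1] = 0 and covariance matrix I_{p_n}, and suppose there are constants C, c > 0 independent of n with E[Y_{1j}^6] ≤ C for all coordinates j, sup_{‖a‖=1} |E[(aᵀY_1)³]| ≤ C and sup_{‖a‖=1} E[(aᵀY_1)⁴] ≤ C. Let γ_n ⊆ {1,…,p_n} with d_n := p_n − |γ_n| → ∞, and let G_n ∈ ℝ^{p_n} be vectors with c√(p_n/n) ≤ ‖G_n‖ ≤ C√(p_n/n); set δ_n = n‖G_n‖². Writing Ȳ = (1/n)Σ_{i=1}^n Y_i and Ȳ_{γ_n} for the vector equal to Ȳ on the coordinates in γ_n and 0 elsewhere, the standardized statistic ( n(‖Ȳ‖²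 − ‖Ȳ_{γ_n}‖²) + 2n G_nᵀȲ − d_n ) / √(2(d_n + 2δ_n)) converges in distribution to the standard normal distribution N(0,1) as n → ∞. -/
open MeasureTheory ProbabilityTheory Filter
open Complex (I)
open scoped Topology Matrix

/-!
Up to the fluctuation of the diagonal terms `‖Y k‖_A ^ 2`, where `A` is the complement of `γ`, the
statistic is a martingale in the observations: adding `Y k` to those in `s` contributes
`⟨v s, Y k⟩` with `v s` independent of `Y k`. Given the observations in `s`, the characteristic
function of this increment is `exp (-‖v s‖ ^ 2 / 2)` up to an error controlled by fourth moments,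
and `‖v s‖ ^ 2` hardly deviates from its mean because, once centred, it is a statistic of the same
form with small coefficients. So the increments may be replaced one at a time by independent
Gaussian ones, at a total cost that vanishes as soon as `d / n → 0` and the variance
`2 (d + 2 n ‖G‖ ^ 2)` tends to infinity; under the same conditions the diagonal terms average out.
-/

section Exponential

lemma norm_exp_I_mul_sub_taylor_le (x : ℝ) :
    ‖Complex.exp (I * x) - (1 + I * x - x ^ 2 / 2)‖ ≤ 4 * |x| ^ 3 := by
  have hx : ‖I * x‖ = |x| := by simp
  have hsum : ∑ m ∈ Finset.range 3, (I * (x : ℂ)) ^ m / m.factorial = 1 + I * x - x ^ 2 / 2 := by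
    simp [Finset.sum_range_succ, mul_pow, Nat.factorial]
    ring
  rcases le_total |x| 1 with h | h
  · have := Complex.exp_bound (x := I * x) (hx.trans_le h) (n := 3) (by norm_num)
    rw [hsum, hx] at this
    refine this.trans ?_
    norm_num [Nat.factorial]
    nlinarith [pow_nonneg (abs_nonneg x) 3]
  · have h2 : |x| ^ 2 ≤ |x| ^ 3 := pow_le_pow_right₀ h (by norm_num)
    calc ‖Complex.exp (I * x) - (1 + I * x - x ^ 2 / 2)‖
        ≤ ‖Complex.exp (I * x)‖ + (‖(1 : ℂ)‖ + ‖I * x‖ + ‖(x : ℂ) ^ 2 / 2‖) :=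
          (norm_sub_le _ _).trans <| add_le_add_right
            ((norm_sub_le _ _).trans (add_le_add_left (norm_add_le _ _) _)) _
      _ = 1 + (1 + |x| + |x| ^ 2 / 2) := by simp [Complex.norm_exp_I_mul_ofReal]
      _ ≤ 4 * |x| ^ 3 := by nlinarith

lemma norm_exp_I_mul_sub_exp_I_mul_le (x y : ℝ) :
    ‖Complex.exp (I * x) - Complex.exp (I * y)‖ ≤ |x - y| := by
  have h : Complex.exp (I * x) - Complex.exp (I * y)
      = Complex.exp (I * y) * (Complex.exp (I * (x - y : ℝ)) - 1) := by
    rw [mul_sub, ← Complex.exp_add]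
    push_cast
    ring_nf
  rw [h, norm_mul, Complex.norm_exp_I_mul_ofReal, one_mul]
  exact Real.norm_exp_I_mul_ofReal_sub_one_le

lemma abs_exp_neg_sub_one_sub_le {x : ℝ} (hx : 0 ≤ x) : |Real.exp (-x) - (1 - x)| ≤ x ^ 2 / 2 := by
  have hquad := Real.quadratic_le_exp_of_nonneg hx
  have hinv : Real.exp (-x) * Real.exp x = 1 := by rw [← Real.exp_add]; simp
  have hpos := Real.exp_pos (-x)
  rw [abs_of_nonneg (by linarith [Real.one_sub_le_exp_neg x])]
  have h1 : Real.exp (-x) * (1 + x + x ^ 2 / 2) ≤ 1 := by nlinarith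
  have h2 : 1 ≤ (1 - x + x ^ 2 / 2) * (1 + x + x ^ 2 / 2) := by nlinarith [sq_nonneg (x ^ 2)]
  have := le_of_mul_le_mul_right (h1.trans h2) (by positivity)
  linarith

lemma abs_exp_neg_sub_exp_neg_le {x y : ℝ} (hx : 0 ≤ x) (hy : 0 ≤ y) :
    |Real.exp (-x) - Real.exp (-y)| ≤ |x - y| := by
  wlog h : x ≤ y generalizing x y
  · rw [abs_sub_comm, abs_sub_comm x]
    exact this hy hx (le_of_not_ge h)
  have hexp : Real.exp (-y) = Real.exp (-x) * Real.exp (-(y - x)) := by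
    rw [← Real.exp_add]; ring_nf
  have hle : Real.exp (-x) ≤ 1 := Real.exp_le_one_iff.2 (by linarith)
  have hle' : Real.exp (-(y - x)) ≤ 1 := Real.exp_le_one_iff.2 (by linarith)
  have hge := Real.one_sub_le_exp_neg (y - x)
  rw [abs_of_nonneg (by rw [hexp]; nlinarith [Real.exp_pos (-x)]), abs_sub_comm,
    abs_of_nonneg (by linarith), hexp]
  nlinarith [Real.exp_pos (-x)]

end Exponential

section SecondMoment

variable {Ω : Type*} {mΩ : MeasurableSpace Ω} {P : Measure Ω}

lemma integrable_pow_four_of_memLp {X : Ω → ℝ} (hX : MemLp X 4 P) :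
    Integrable (fun ω ↦ X ω ^ 4) P := by
  simpa [Even.pow_abs (by decide : Even 4)] using hX.integrable_norm_pow (p := 4) (by norm_num)

variable [IsProbabilityMeasure P]

lemma integrable_exp_I_mul {X : Ω → ℝ} (hX : AEMeasurable X P) :
    Integrable (fun ω ↦ Complex.exp (I * X ω)) P :=
  .of_bound (C := 1) (by fun_prop) (ae_of_all _ fun ω ↦ (Complex.norm_exp_I_mul_ofReal _).le)

lemma integral_abs_le_of_integral_sq_le {X : Ω → ℝ} {r : ℝ} (hX : MemLp X 2 P) (hr : 0 ≤ r)
    (h : ∫ ω, X ω ^ 2 ∂P ≤ r ^ 2) : ∫ ω, |X ω| ∂P ≤ r := by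
  refine abs_le_of_sq_le_sq' ?_ hr |>.2
  have hvar := variance_nonneg (|X|) P
  rw [variance_eq_sub hX.abs] at hvar
  simp only [Pi.pow_apply, Pi.abs_apply, sq_abs] at hvar
  linarith

lemma norm_integral_exp_I_mul_sub_one_sub_le {X : Ω → ℝ} (hX : MemLp X 4 P)
    (h0 : ∫ ω, X ω ∂P = 0) {ε : ℝ} (hε : 0 < ε) :
    ‖∫ ω, Complex.exp (I * X ω) ∂P - ((1 - (∫ ω, X ω ^ 2 ∂P) / 2 : ℝ) : ℂ)‖
      ≤ 2 * (ε * ∫ ω, X ω ^ 2 ∂P + (∫ ω, X ω ^ 4 ∂P) / ε) := by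
  have hX2 : MemLp X 2 P := hX.mono_exponent (by norm_num)
  have hint2 : Integrable (fun ω ↦ X ω ^ 2) P := hX2.integrable_sq
  have hint4 : Integrable (fun ω ↦ X ω ^ 4) P := integrable_pow_four_of_memLp hX
  have hintC : Integrable (fun ω ↦ (X ω : ℂ)) P := (hX2.integrable one_le_two).ofReal
  have hint2C : Integrable (fun ω ↦ (X ω ^ 2 : ℂ)) P := by exact_mod_cast hint2.ofReal (𝕜 := ℂ)
  have hlin : Integrable (fun ω ↦ (1 + I * X ω : ℂ)) P :=
    (integrable_const 1).add (hintC.const_mul I)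
  have htaylor : ∫ ω, (1 + I * X ω - X ω ^ 2 / 2 : ℂ) ∂P
      = ((1 - (∫ ω, X ω ^ 2 ∂P) / 2 : ℝ) : ℂ) := by
    rw [integral_sub hlin (hint2C.div_const 2),
      integral_add (integrable_const 1) (hintC.const_mul I), integral_const_mul, integral_div,
      integral_complex_ofReal, h0]
    simp only [← Complex.ofReal_pow, integral_complex_ofReal]
    simp
  -- AM-GM: `2 |x|³ ≤ ε x² + x⁴ / ε`
  have hamgm (x : ℝ) : 4 * |x| ^ 3 ≤ 2 * (ε * x ^ 2 + x ^ 4 / ε) := by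
    have hsq : 0 ≤ |x| ^ 2 * (|x| - ε) ^ 2 / ε := by positivity
    have hexpand : |x| ^ 2 * (|x| - ε) ^ 2 / ε = ε * |x| ^ 2 + |x| ^ 4 / ε - 2 * |x| ^ 3 := by
      field_simp
      ring
    rw [hexpand, sq_abs, Even.pow_abs (by decide : Even 4)] at hsq
    linarith
  have hbound : Integrable (fun ω ↦ ε * X ω ^ 2 + X ω ^ 4 / ε) P :=
    (hint2.const_mul ε).add (hint4.div_const ε)
  rw [← htaylor, ← integral_sub (integrable_exp_I_mul hX.1.aemeasurable)
    (by exact hlin.sub (hint2C.div_const 2))]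
  refine (norm_integral_le_of_norm_le (hbound.const_mul 2) (ae_of_all _ fun ω ↦
    (norm_exp_I_mul_sub_taylor_le _).trans (hamgm _))).trans_eq ?_
  rw [integral_const_mul, integral_add (hint2.const_mul ε) (hint4.div_const ε),
    integral_const_mul, integral_div]

lemma norm_integral_exp_I_mul_sub_exp_neg_le {X : Ω → ℝ} (hX : MemLp X 4 P)
    (h0 : ∫ ω, X ω ∂P = 0) {ε : ℝ} (hε : 0 < ε) :
    ‖∫ ω, Complex.exp (I * X ω) ∂P - Real.exp (-((∫ ω, X ω ^ 2 ∂P) / 2))‖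
      ≤ 2 * (ε * ∫ ω, X ω ^ 2 ∂P + (∫ ω, X ω ^ 4 ∂P) / ε) + (∫ ω, X ω ^ 2 ∂P) ^ 2 / 8 := by
  refine (norm_sub_le_norm_sub_add_norm_sub _ _ _).trans
    (add_le_add (norm_integral_exp_I_mul_sub_one_sub_le hX h0 hε) ?_)
  rw [← Complex.ofReal_sub, Complex.norm_real, norm_sub_rev]
  exact (abs_exp_neg_sub_one_sub_le (by positivity)).trans_eq (by ring)

end SecondMoment

section Independence

variable {Ω E F G : Type*} {mΩ : MeasurableSpace Ω} [MeasurableSpace E] [MeasurableSpace F]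
  [NormedAddCommGroup G] [NormedSpace ℝ G] {P : Measure Ω} [IsFiniteMeasure P]

lemma integral_comp_prodMk_of_indepFun {Z : Ω → E} {Y : Ω → F} (hZ : AEMeasurable Z P)
    (hY : AEMeasurable Y P) (hind : IndepFun Z Y P) {f : E × F → G} (hf : StronglyMeasurable f)
    (hint : Integrable (fun ω ↦ f (Z ω, Y ω)) P) :
    ∫ ω, f (Z ω, Y ω) ∂P = ∫ ω, ∫ ω', f (Z ω, Y ω') ∂P ∂P := by
  have hmap := (indepFun_iff_map_prod_eq_prod_map_map hZ hY).1 hind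
  have hint' : Integrable f ((P.map Z).prod (P.map Y)) := by
    rw [← hmap]
    exact (integrable_map_measure hf.aestronglyMeasurable (hZ.prodMk hY)).2 hint
  rw [← integral_map (hZ.prodMk hY) hf.aestronglyMeasurable, hmap, integral_prod _ hint',
    integral_map hZ hf.integral_prod_right'.aestronglyMeasurable]
  congr with ω
  exact integral_map hY (hf.comp_measurable measurable_prodMk_left).aestronglyMeasurable

end Independence

/-- A centred random vector with identity covariance whose linear forms `⟨a, Y⟩` have fourth
moment at most `C ‖a‖⁴`. The identity covariance is encoded through the second moments of the
linear forms. -/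
structure IsIsotropic {Ω ι : Type*} [Fintype ι] {mΩ : MeasurableSpace Ω} (Y : Ω → ι → ℝ) (C : ℝ)
    (P : Measure Ω) : Prop where
  nonneg : 0 ≤ C
  memLp : ∀ j, MemLp (fun ω ↦ Y ω j) 4 P
  integral_eq_zero : ∀ j, ∫ ω, Y ω j ∂P = 0
  integral_dotProduct_sq : ∀ a, ∫ ω, (a ⬝ᵥ Y ω) ^ 2 ∂P = a ⬝ᵥ a
  integral_dotProduct_pow_four_le : ∀ a, ∫ ω, (a ⬝ᵥ Y ω) ^ 4 ∂P ≤ C * (a ⬝ᵥ a) ^ 2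

namespace IsIsotropic

variable {Ω ι : Type*} [Fintype ι] {mΩ : MeasurableSpace Ω} {P : Measure Ω} {Y : Ω → ι → ℝ}
  {C : ℝ}

lemma aemeasurable (h : IsIsotropic Y C P) : AEMeasurable Y P :=
  aemeasurable_pi_lambda _ fun j ↦ (h.memLp j).1.aemeasurable

lemma memLp_dotProduct (h : IsIsotropic Y C P) (a : ι → ℝ) : MemLp (fun ω ↦ a ⬝ᵥ Y ω) 4 P :=
  memLp_finsetSum _ fun j _ ↦ (h.memLp j).const_mul _

lemma integral_sq (h : IsIsotropic Y C P) (j : ι) : ∫ ω, Y ω j ^ 2 ∂P = 1 := by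
  classical simpa using h.integral_dotProduct_sq (Pi.single j 1)

lemma integral_pow_four_le (h : IsIsotropic Y C P) (j : ι) : ∫ ω, Y ω j ^ 4 ∂P ≤ C := by
  classical simpa using h.integral_dotProduct_pow_four_le (Pi.single j 1)

lemma integral_dotProduct [IsFiniteMeasure P] (h : IsIsotropic Y C P) (a : ι → ℝ) :
    ∫ ω, a ⬝ᵥ Y ω ∂P = 0 := by
  have hint (j : ι) : Integrable (fun ω ↦ Y ω j) P := (h.memLp j).integrable (by norm_num)
  simp only [dotProduct]
  rw [integral_finsetSum _ fun j _ ↦ (hint j).const_mul _]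
  simp [integral_const_mul, h.integral_eq_zero]

lemma norm_integral_exp_I_mul_dotProduct_sub_le [IsProbabilityMeasure P]
    (h : IsIsotropic Y C P) (a : ι → ℝ) {ε : ℝ} (hε : 0 < ε) :
    ‖∫ ω, Complex.exp (I * (a ⬝ᵥ Y ω : ℝ)) ∂P - Real.exp (-(a ⬝ᵥ a / 2))‖
      ≤ 2 * (ε * (a ⬝ᵥ a) + C * (a ⬝ᵥ a) ^ 2 / ε) + (a ⬝ᵥ a) ^ 2 / 8 := by
  have := norm_integral_exp_I_mul_sub_exp_neg_le (h.memLp_dotProduct a) (h.integral_dotProduct a) hε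
  rw [h.integral_dotProduct_sq a] at this
  exact this.trans (by gcongr; exact h.integral_dotProduct_pow_four_le a)

end IsIsotropic

lemma memLp_dotProduct_of_memLp_four {Ω ι : Type*} [Fintype ι] {mΩ : MeasurableSpace Ω}
    {P : Measure Ω} {v u : Ω → ι → ℝ} (hv : ∀ j, MemLp (fun ω ↦ v ω j) 4 P)
    (hu : ∀ j, MemLp (fun ω ↦ u ω j) 4 P) : MemLp (fun ω ↦ v ω ⬝ᵥ u ω) 2 P := by
  have : ENNReal.HolderTriple 4 4 2 := ⟨by
    rw [← two_mul, show (4 : ENNReal) = 2 * 2 by norm_num, ENNReal.mul_inv (by simp) (by simp),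
      ← mul_assoc, ENNReal.mul_inv_cancel (by simp) (by simp), one_mul]⟩
  exact memLp_finsetSum _ fun j _ ↦ (hu j).mul' (hv j)

/-- Bound on the error made when `exp (i ⟨v, Y⟩)`, for a random direction `v` independent of `Y`,
is replaced by the Gaussian factor `exp (-w / 2)`, where `w` and `r ^ 2` control the mean and the
variance of `‖v‖ ^ 2`; the parameter `ε` trades second against fourth moments of `⟨v, Y⟩`. -/
noncomputable def gaussianStepError (C ε w r : ℝ) : ℝ :=
  r / 2 + 2 * (ε * w + C * (w ^ 2 + r ^ 2) / ε) + (w ^ 2 + r ^ 2) / 8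

lemma integral_abs_sub_add_le_gaussianStepError {Ω : Type*} {mΩ : MeasurableSpace Ω}
    {P : Measure Ω} [IsProbabilityMeasure P] {q : Ω → ℝ} (hq : MemLp q 2 P) {C ε w r : ℝ}
    (hC : 0 ≤ C) (hε : 0 < ε) (hr : 0 ≤ r) (h0 : 0 ≤ ∫ ω, q ω ∂P) (hw : ∫ ω, q ω ∂P ≤ w)
    (hvar : Var[q; P] ≤ r ^ 2) :
    Integrable (fun ω ↦ |q ω - ∫ ω, q ω ∂P| / 2
      + (2 * (ε * q ω + C / ε * q ω ^ 2) + q ω ^ 2 / 8)) P ∧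
    ∫ ω, (|q ω - ∫ ω, q ω ∂P| / 2 + (2 * (ε * q ω + C / ε * q ω ^ 2) + q ω ^ 2 / 8)) ∂P
      ≤ gaussianStepError C ε w r := by
  have hdev_memLp : MemLp (fun ω ↦ q ω - ∫ ω, q ω ∂P) 2 P := hq.sub (memLp_const _)
  have hdev : ∫ ω, |q ω - ∫ ω, q ω ∂P| ∂P ≤ r :=
    integral_abs_le_of_integral_sq_le hdev_memLp hr
      (variance_eq_integral hq.1.aemeasurable ▸ hvar)
  have hsq : ∫ ω, q ω ^ 2 ∂P ≤ w ^ 2 + r ^ 2 := by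
    have hvar_eq := variance_eq_sub hq
    have hmean_sq : (∫ ω, q ω ∂P) ^ 2 ≤ w ^ 2 := by gcongr
    simp only [Pi.pow_apply] at hvar_eq
    linarith
  have hint := hq.integrable one_le_two
  have hint2 := hq.integrable_sq
  have hint_dev := (hdev_memLp.integrable one_le_two).abs.div_const 2
  have hint_mom : Integrable (fun ω ↦ 2 * (ε * q ω + C / ε * q ω ^ 2)) P :=
    ((hint.const_mul ε).add (hint2.const_mul (C / ε))).const_mul 2
  have hint_rest : Integrable (fun ω ↦ 2 * (ε * q ω + C / ε * q ω ^ 2) + q ω ^ 2 / 8) P :=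
    hint_mom.add (hint2.div_const 8)
  refine ⟨hint_dev.add hint_rest, ?_⟩
  calc _ = (∫ ω, |q ω - ∫ ω, q ω ∂P| ∂P) / 2 + (2 * (ε * ∫ ω, q ω ∂P + C / ε * ∫ ω, q ω ^ 2 ∂P)
        + (∫ ω, q ω ^ 2 ∂P) / 8) := by
        rw [integral_add hint_dev hint_rest, integral_add hint_mom (hint2.div_const 8),
          integral_div, integral_div, integral_const_mul,
          integral_add (hint.const_mul ε) (hint2.const_mul _), integral_const_mul,
          integral_const_mul]
    _ ≤ r / 2 + (2 * (ε * w + C / ε * (w ^ 2 + r ^ 2)) + (w ^ 2 + r ^ 2) / 8) := by gcongr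
    _ = gaussianStepError C ε w r := by rw [gaussianStepError]; ring

section Step

variable {Ω ι : Type*} [Fintype ι] {mΩ : MeasurableSpace Ω} {P : Measure Ω}
  [IsProbabilityMeasure P] {Y v : Ω → ι → ℝ} {M : Ω → ℝ} {C : ℝ}

lemma integral_sq_add_dotProduct (hY : IsIsotropic Y C P) (hM : MemLp M 2 P)
    (hv : ∀ j, MemLp (fun ω ↦ v ω j) 4 P) (hind : IndepFun (fun ω ↦ (M ω, v ω)) Y P) :
    ∫ ω, (M ω + v ω ⬝ᵥ Y ω) ^ 2 ∂P = ∫ ω, M ω ^ 2 ∂P + ∫ ω, v ω ⬝ᵥ v ω ∂P := by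
  have hv' : AEMeasurable v P := aemeasurable_pi_lambda _ fun j ↦ (hv j).1.aemeasurable
  have hvv : Integrable (fun ω ↦ v ω ⬝ᵥ v ω) P :=
    (memLp_dotProduct_of_memLp_four hv hv).integrable one_le_two
  have hinner (ω : Ω) : ∫ ω', (M ω + v ω ⬝ᵥ Y ω') ^ 2 ∂P = M ω ^ 2 + v ω ⬝ᵥ v ω := by
    have hlin := (hY.memLp_dotProduct (v ω)).mono_exponent (q := 4) (p := 2) (by norm_num)
    have hint : Integrable (fun ω' ↦ v ω ⬝ᵥ Y ω') P := hlin.integrable one_le_two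
    have hexpand (ω' : Ω) : (M ω + v ω ⬝ᵥ Y ω') ^ 2
        = M ω ^ 2 + (2 * M ω * (v ω ⬝ᵥ Y ω') + (v ω ⬝ᵥ Y ω') ^ 2) := by ring
    simp_rw [hexpand]
    rw [integral_add (integrable_const _) (by exact (hint.const_mul _).add hlin.integrable_sq),
      integral_add (hint.const_mul _) hlin.integrable_sq, integral_const_mul,
      hY.integral_dotProduct, hY.integral_dotProduct_sq]
    simp
  have hf : Measurable fun z : (ℝ × (ι → ℝ)) × (ι → ℝ) ↦ (z.1.1 + z.1.2 ⬝ᵥ z.2) ^ 2 := by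
    fun_prop
  rw [integral_comp_prodMk_of_indepFun (hM.1.aemeasurable.prodMk hv') hY.aemeasurable hind
    (f := fun z ↦ (z.1.1 + z.1.2 ⬝ᵥ z.2) ^ 2) hf.stronglyMeasurable
    (hM.add (memLp_dotProduct_of_memLp_four hv hY.memLp)).integrable_sq]
  simp_rw [hinner]
  exact integral_add hM.integrable_sq hvv

lemma norm_integral_exp_I_mul_dotProduct_sub_const_le (hY : IsIsotropic Y C P) (m : ℝ)
    (a : ι → ℝ) {ε c : ℝ} (hε : 0 < ε) (hc : 0 ≤ c) :
    ‖∫ ω, (Complex.exp (I * (m + a ⬝ᵥ Y ω : ℝ)) - Real.exp (-(c / 2)) * Complex.exp (I * m)) ∂P‖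
      ≤ |a ⬝ᵥ a - c| / 2 + (2 * (ε * (a ⬝ᵥ a) + C / ε * (a ⬝ᵥ a) ^ 2) + (a ⬝ᵥ a) ^ 2 / 8) := by
  have hφ := integrable_exp_I_mul (hY.memLp_dotProduct a).1.aemeasurable
  have hfactor (ω : Ω) :
      Complex.exp (I * (m + a ⬝ᵥ Y ω : ℝ)) - Real.exp (-(c / 2)) * Complex.exp (I * m)
        = Complex.exp (I * m) * (Complex.exp (I * (a ⬝ᵥ Y ω : ℝ)) - Real.exp (-(c / 2))) := by
    rw [Complex.ofReal_add, mul_add, Complex.exp_add]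
    ring
  have hexp : ‖(Real.exp (-(a ⬝ᵥ a / 2)) : ℂ) - Real.exp (-(c / 2))‖ ≤ |a ⬝ᵥ a - c| / 2 := by
    rw [← Complex.ofReal_sub, Complex.norm_real]
    refine (abs_exp_neg_sub_exp_neg_le ?_ (by positivity)).trans_eq ?_
    · exact div_nonneg (dotProduct_self_star_nonneg a) zero_le_two
    · rw [← sub_div, abs_div, abs_two]
  simp_rw [hfactor]
  rw [integral_const_mul, norm_mul, Complex.norm_exp_I_mul_ofReal, one_mul,
    integral_sub hφ (integrable_const _), integral_const, probReal_univ, one_smul, add_comm (_ / 2)]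
  refine (norm_sub_le_norm_sub_add_norm_sub _ _ _).trans
    (add_le_add ((hY.norm_integral_exp_I_mul_dotProduct_sub_le a hε).trans_eq ?_) hexp)
  ring

lemma norm_integral_exp_I_mul_add_dotProduct_sub_le (hY : IsIsotropic Y C P) (hM : AEMeasurable M P)
    (hv : ∀ j, MemLp (fun ω ↦ v ω j) 4 P) (hind : IndepFun (fun ω ↦ (M ω, v ω)) Y P)
    {ε w r : ℝ} (hε : 0 < ε) (hr : 0 ≤ r) (hw : ∫ ω, v ω ⬝ᵥ v ω ∂P ≤ w)
    (hvar : Var[fun ω ↦ v ω ⬝ᵥ v ω; P] ≤ r ^ 2) :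
    ‖∫ ω, Complex.exp (I * (M ω + v ω ⬝ᵥ Y ω : ℝ)) ∂P
        - Real.exp (-((∫ ω, v ω ⬝ᵥ v ω ∂P) / 2)) * ∫ ω, Complex.exp (I * M ω) ∂P‖
      ≤ gaussianStepError C ε w r := by
  have hv' : AEMeasurable v P := aemeasurable_pi_lambda _ fun j ↦ (hv j).1.aemeasurable
  have hvY := (memLp_dotProduct_of_memLp_four hv hY.memLp).1.aemeasurable
  have hvv : MemLp (fun ω ↦ v ω ⬝ᵥ v ω) 2 P := memLp_dotProduct_of_memLp_four hv hv
  set c : ℝ := ∫ ω, v ω ⬝ᵥ v ω ∂P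
  have hc : 0 ≤ c := integral_nonneg fun ω ↦ dotProduct_self_star_nonneg (v ω)
  obtain ⟨hbound, hbound_le⟩ :=
    integral_abs_sub_add_le_gaussianStepError hvv hY.nonneg hε hr hc hw hvar
  let f : (ℝ × (ι → ℝ)) × (ι → ℝ) → ℂ := fun z ↦
    Complex.exp (I * (z.1.1 + z.1.2 ⬝ᵥ z.2 : ℝ)) - Real.exp (-(c / 2)) * Complex.exp (I * z.1.1)
  have hf : Measurable f := by fun_prop
  have hfubini : ∫ ω, f ((M ω, v ω), Y ω) ∂P = ∫ ω, ∫ ω', f ((M ω, v ω), Y ω') ∂P ∂P :=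
    integral_comp_prodMk_of_indepFun (hM.prodMk hv') hY.aemeasurable hind hf.stronglyMeasurable
      ((integrable_exp_I_mul (hM.add hvY)).sub ((integrable_exp_I_mul hM).const_mul _))
  rw [← integral_const_mul, ← integral_sub (by exact integrable_exp_I_mul (hM.add hvY))
    ((integrable_exp_I_mul hM).const_mul _)]
  refine (congrArg norm hfubini).trans_le (le_trans ?_ hbound_le)
  exact norm_integral_le_of_norm_le hbound (ae_of_all _ fun ω ↦
    norm_integral_exp_I_mul_dotProduct_sub_const_le hY (M ω) (v ω) hε hc)

end Step

/-- A martingale indexed by sets of observations, whose increment upon adding the observation `Y k`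
to `s` is `⟨v s, Y k⟩` for a random direction `v s` that, like `M s`, is independent of `Y k`.
Indexing by finite sets rather than by `ℕ` lets the observations be added in any order. -/
structure IsLinearMartingale {Ω ι κ : Type*} [Fintype ι] {mΩ : MeasurableSpace Ω}
    (Y : κ → Ω → ι → ℝ) (M : Finset κ → Ω → ℝ) (v : Finset κ → Ω → ι → ℝ) (P : Measure Ω) :
    Prop where
  memLp_direction : ∀ s j, MemLp (fun ω ↦ v s ω j) 4 P
  empty : ∀ ω, M ∅ ω = 0
  cons : ∀ {k s} (hk : k ∉ s) ω, M (s.cons k hk) ω = M s ω + v s ω ⬝ᵥ Y k ω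
  indepFun : ∀ {k s}, k ∉ s → IndepFun (fun ω ↦ (M s ω, v s ω)) (Y k) P

namespace IsLinearMartingale

variable {Ω ι κ : Type*} [Fintype ι] {mΩ : MeasurableSpace Ω} {P : Measure Ω}
  {Y : κ → Ω → ι → ℝ} {M : Finset κ → Ω → ℝ} {v : Finset κ → Ω → ι → ℝ}
  {C : ℝ}

lemma memLp_two (h : IsLinearMartingale Y M v P) (hY : ∀ k, IsIsotropic (Y k) C P)
    (s : Finset κ) : MemLp (M s) 2 P := by
  induction s using Finset.cons_induction with
  | empty => simp [funext h.empty]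
  | cons k s hk ih =>
    rw [funext (h.cons hk)]
    exact ih.add (memLp_dotProduct_of_memLp_four (h.memLp_direction s) (hY k).memLp)

variable [IsProbabilityMeasure P]

lemma integral_sq_cons (h : IsLinearMartingale Y M v P) (hY : ∀ k, IsIsotropic (Y k) C P)
    {k : κ} {s : Finset κ} (hk : k ∉ s) :
    ∫ ω, M (s.cons k hk) ω ^ 2 ∂P = ∫ ω, M s ω ^ 2 ∂P + ∫ ω, v s ω ⬝ᵥ v s ω ∂P := by
  simp_rw [h.cons hk]
  exact integral_sq_add_dotProduct (hY k) (h.memLp_two hY s) (h.memLp_direction s) (h.indepFun hk)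

lemma norm_integral_exp_sub_le (h : IsLinearMartingale Y M v P)
    (hY : ∀ k, IsIsotropic (Y k) C P) {ε w r : ℝ} (hε : 0 < ε) (hr : 0 ≤ r)
    (hw : ∀ s, ∫ ω, v s ω ⬝ᵥ v s ω ∂P ≤ w)
    (hvar : ∀ s, Var[fun ω ↦ v s ω ⬝ᵥ v s ω; P] ≤ r ^ 2) (s : Finset κ) :
    ‖∫ ω, Complex.exp (I * M s ω) ∂P - Real.exp (-((∫ ω, M s ω ^ 2 ∂P) / 2))‖
      ≤ s.card * gaussianStepError C ε w r := by
  induction s using Finset.cons_induction with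
  | empty => simp [h.empty]
  | cons k s hk ih =>
    have hstep := norm_integral_exp_I_mul_add_dotProduct_sub_le (hY k)
      (h.memLp_two hY s).1.aemeasurable (h.memLp_direction s) (h.indepFun hk) hε hr (hw s) (hvar s)
    set c := ∫ ω, v s ω ⬝ᵥ v s ω ∂P
    have hc : ‖(Real.exp (-(c / 2)) : ℂ)‖ ≤ 1 := by
      have : 0 ≤ c := integral_nonneg fun ω ↦ dotProduct_self_star_nonneg (v s ω)
      rw [Complex.norm_real, Real.norm_eq_abs, Real.abs_exp]
      exact Real.exp_le_one_iff.2 (by linarith)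
    have hgauss : (Real.exp (-((∫ ω, M (s.cons k hk) ω ^ 2 ∂P) / 2)) : ℂ)
        = Real.exp (-(c / 2)) * Real.exp (-((∫ ω, M s ω ^ 2 ∂P) / 2)) := by
      rw [h.integral_sq_cons hY hk, ← Complex.ofReal_mul, ← Real.exp_add]
      congr 2
      ring
    simp_rw [hgauss, h.cons hk, Finset.card_cons]
    rw [Nat.cast_succ, add_one_mul, add_comm (_ * _)]
    refine (norm_sub_le_norm_sub_add_norm_sub _ _ _).trans (add_le_add hstep ?_)
    rw [← mul_sub, norm_mul]
    exact (mul_le_of_le_one_left (norm_nonneg _) hc).trans ih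

end IsLinearMartingale

/-- The squared Euclidean norm of the projection of `x` to the coordinates in `A`. -/
def sqNormOn {ι : Type*} (A : Finset ι) (x : ι → ℝ) : ℝ := ∑ j ∈ A, x j ^ 2

section SqNormOn

variable {ι : Type*}

@[fun_prop]
lemma measurable_sqNormOn (A : Finset ι) : Measurable (sqNormOn A) := by
  unfold sqNormOn
  fun_prop

lemma sqNormOn_smul (A : Finset ι) (c : ℝ) (x : ι → ℝ) :
    sqNormOn A (c • x) = c ^ 2 * sqNormOn A x := by
  simp [sqNormOn, Finset.mul_sum, mul_pow]

variable [Fintype ι]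

lemma indicator_dotProduct (A : Finset ι) (x y : ι → ℝ) :
    (A : Set ι).indicator x ⬝ᵥ y = ∑ j ∈ A, x j * y j := by
  classical simp [dotProduct, Set.indicator_apply]

lemma indicator_dotProduct_comm (A : Finset ι) (x y : ι → ℝ) :
    (A : Set ι).indicator x ⬝ᵥ y = (A : Set ι).indicator y ⬝ᵥ x := by
  simp only [indicator_dotProduct, mul_comm]

lemma indicator_dotProduct_indicator (A : Finset ι) (x : ι → ℝ) :
    (A : Set ι).indicator x ⬝ᵥ (A : Set ι).indicator x = sqNormOn A x := by
  rw [indicator_dotProduct, sqNormOn]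
  exact Finset.sum_congr rfl fun j hj ↦ by simp [hj, sq]

lemma sqNormOn_add (A : Finset ι) (x y : ι → ℝ) :
    sqNormOn A (x + y) = sqNormOn A x + 2 * ((A : Set ι).indicator x ⬝ᵥ y) + sqNormOn A y := by
  simp only [indicator_dotProduct, sqNormOn, Finset.mul_sum, ← Finset.sum_add_distrib, Pi.add_apply]
  exact Finset.sum_congr rfl fun j _ ↦ by ring

end SqNormOn

namespace IsIsotropic

variable {Ω ι : Type*} [Fintype ι] {mΩ : MeasurableSpace Ω} {P : Measure Ω} {Y : Ω → ι → ℝ}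
  {C : ℝ}

lemma memLp_sqNormOn (h : IsIsotropic Y C P) (A : Finset ι) :
    MemLp (fun ω ↦ sqNormOn A (Y ω)) 2 P := by
  classical
  have h0 (j : ι) : MemLp (fun ω ↦ (A : Set ι).indicator (Y ω) j) 4 P := by
    by_cases hj : j ∈ A <;> simp [hj, h.memLp j]
  simp_rw [← indicator_dotProduct_indicator]
  exact memLp_dotProduct_of_memLp_four h0 h0

variable [IsProbabilityMeasure P]

lemma integral_sqNormOn (h : IsIsotropic Y C P) (A : Finset ι) :
    ∫ ω, sqNormOn A (Y ω) ∂P = A.card := by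
  unfold sqNormOn
  rw [integral_finsetSum _ fun j _ ↦
    ((h.memLp j).mono_exponent (p := 2) (by norm_num)).integrable_sq]
  simp [h.integral_sq]

lemma integral_sqNormOn_sub_card_sq_le (h : IsIsotropic Y C P) (A : Finset ι) :
    ∫ ω, (sqNormOn A (Y ω) - A.card) ^ 2 ∂P ≤ C * A.card ^ 2 := by
  have hint4 (j : ι) : Integrable (fun ω ↦ Y ω j ^ 4) P := integrable_pow_four_of_memLp (h.memLp j)
  have hvar := variance_eq_integral (h.memLp_sqNormOn A).1.aemeasurable
  rw [h.integral_sqNormOn] at hvar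
  calc ∫ ω, (sqNormOn A (Y ω) - A.card) ^ 2 ∂P
      = Var[fun ω ↦ sqNormOn A (Y ω); P] := hvar.symm
    _ ≤ ∫ ω, sqNormOn A (Y ω) ^ 2 ∂P :=
        variance_le_expectation_sq (h.memLp_sqNormOn A).1
    _ ≤ ∫ ω, A.card * ∑ j ∈ A, Y ω j ^ 4 ∂P := by
        refine integral_mono (h.memLp_sqNormOn A).integrable_sq
          ((integrable_finsetSum _ fun j _ ↦ hint4 j).const_mul _) fun ω ↦ ?_
        refine (sq_sum_le_card_mul_sum_sq (s := A) (f := fun j ↦ Y ω j ^ 2)).trans_eq ?_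
        simp only [← pow_mul, Nat.reduceMul]
    _ = A.card * ∑ j ∈ A, ∫ ω, Y ω j ^ 4 ∂P := by
        rw [integral_const_mul, integral_finsetSum _ fun j _ ↦ hint4 j]
    _ ≤ A.card * ∑ _j ∈ A, C := by
        gcongr with j
        exact h.integral_pow_four_le j
    _ = C * A.card ^ 2 := by
        rw [Finset.sum_const, nsmul_eq_mul]
        ring

end IsIsotropic

section Sums

variable {Ω κ : Type*} {mΩ : MeasurableSpace Ω} {P : Measure Ω} [IsProbabilityMeasure P]

lemma integral_sq_sum_of_iIndepFun {X : κ → Ω → ℝ} (hX : ∀ k, MemLp (X k) 2 P)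
    (h0 : ∀ k, ∫ ω, X k ω ∂P = 0) (hind : iIndepFun X P) (s : Finset κ) :
    ∫ ω, (∑ k ∈ s, X k ω) ^ 2 ∂P = ∑ k ∈ s, ∫ ω, X k ω ^ 2 ∂P := by
  have hsum : ∫ ω, (∑ k ∈ s, X k) ω ∂P = 0 := by
    simp only [Finset.sum_apply]
    rw [integral_finsetSum _ fun k _ ↦ (hX k).integrable one_le_two]
    simp [h0]
  have hvar := IndepFun.variance_sum (X := X) (s := s) (fun k _ ↦ hX k)
    (fun k _ l _ hkl ↦ hind.indepFun hkl)
  rw [variance_of_integral_eq_zero (memLp_finsetSum' _ fun k _ ↦ hX k).1.aemeasurable hsum] at hvar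
  simpa only [Finset.sum_apply, variance_of_integral_eq_zero (hX _).1.aemeasurable (h0 _)]
    using hvar

end Sums

/-- The off-diagonal part `a ∑_{k ≠ l} ⟨Y k, Y l⟩_A` of `a ‖∑ Y k‖_A ^ 2`, plus the linear form
`⟨b, ∑ Y k⟩`, over the observations `k ∈ s`. -/
def quadLinear {Ω ι κ : Type*} [Fintype ι] (A : Finset ι) (a : ℝ) (b : ι → ℝ) (Y : κ → Ω → ι → ℝ)
    (s : Finset κ) (ω : Ω) : ℝ :=
  a * (sqNormOn A (∑ k ∈ s, Y k ω) - ∑ k ∈ s, sqNormOn A (Y k ω)) + b ⬝ᵥ ∑ k ∈ s, Y k ω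

/-- The direction along which a new observation enters `quadLinear`. -/
noncomputable def quadLinearDirection {Ω ι κ : Type*} (A : Finset ι) (a : ℝ) (b : ι → ℝ)
    (Y : κ → Ω → ι → ℝ) (s : Finset κ) (ω : Ω) : ι → ℝ :=
  (2 * a) • (A : Set ι).indicator (∑ k ∈ s, Y k ω) + b

section QuadLinear

variable {Ω ι κ : Type*} [Fintype ι]

lemma quadLinear_cons (A : Finset ι) (a : ℝ) (b : ι → ℝ) (Y : κ → Ω → ι → ℝ) {k : κ}
    {s : Finset κ} (hk : k ∉ s) (ω : Ω) :
    quadLinear A a b Y (s.cons k hk) ω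
      = quadLinear A a b Y s ω + quadLinearDirection A a b Y s ω ⬝ᵥ Y k ω := by
  simp only [quadLinear, quadLinearDirection, Finset.sum_cons, add_comm (Y k ω), sqNormOn_add,
    dotProduct_add, add_dotProduct, smul_dotProduct, smul_eq_mul]
  ring

lemma quadLinearDirection_dotProduct_self (A : Finset ι) (a : ℝ) (b : ι → ℝ) (Y : κ → Ω → ι → ℝ)
    (s : Finset κ) (ω : Ω) :
    quadLinearDirection A a b Y s ω ⬝ᵥ quadLinearDirection A a b Y s ω
      = 4 * a ^ 2 * sqNormOn A (∑ k ∈ s, Y k ω)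
        + ((4 * a) • (A : Set ι).indicator b) ⬝ᵥ ∑ k ∈ s, Y k ω + b ⬝ᵥ b := by
  simp only [quadLinearDirection, dotProduct_add, add_dotProduct, smul_dotProduct, dotProduct_smul,
    smul_eq_mul, indicator_dotProduct_indicator, dotProduct_comm b]
  rw [indicator_dotProduct_comm A _ b]
  ring

variable {mΩ : MeasurableSpace Ω} {P : Measure Ω} {Y : κ → Ω → ι → ℝ} {C : ℝ}

lemma indepFun_quadLinear (hY : ∀ k, AEMeasurable (Y k) P) (hind : iIndepFun Y P) (A : Finset ι)
    (a : ℝ) (b : ι → ℝ) {k : κ} {s : Finset κ} (hk : k ∉ s) :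
    IndepFun (fun ω ↦ (quadLinear A a b Y s ω, quadLinearDirection A a b Y s ω)) (Y k) P := by
  have hpair : Measurable fun y : ι → ℝ ↦ (y, sqNormOn A y) := by fun_prop
  have hsum := (hind.comp (fun _ y ↦ (y, sqNormOn A y)) fun _ ↦ hpair).indepFun_finsetSum_of_notMem₀
    (fun l ↦ hpair.comp_aemeasurable (hY l)) hk
  have hindicator : Measurable fun x : ι → ℝ ↦ (A : Set ι).indicator x := by
    classical
    refine measurable_pi_lambda _ fun j ↦ ?_
    by_cases hj : j ∈ A <;> simp [hj, measurable_pi_apply j]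
  have hstate : Measurable fun z : (ι → ℝ) × ℝ ↦
      (a * (sqNormOn A z.1 - z.2) + b ⬝ᵥ z.1, (2 * a) • (A : Set ι).indicator z.1 + b) := by
    have hfst : Measurable fun z : (ι → ℝ) × ℝ ↦ (A : Set ι).indicator z.1 :=
      hindicator.comp measurable_fst
    fun_prop
  have hcomp := hsum.comp hstate measurable_fst
  simpa [Function.comp_def, Prod.fst_sum, Prod.snd_sum, quadLinear, quadLinearDirection] using hcomp

variable [IsProbabilityMeasure P]

lemma isLinearMartingale_quadLinear (hY : ∀ k, IsIsotropic (Y k) C P) (hind : iIndepFun Y P)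
    (A : Finset ι) (a : ℝ) (b : ι → ℝ) :
    IsLinearMartingale Y (quadLinear A a b Y) (quadLinearDirection A a b Y) P where
  memLp_direction s j := by
    classical
    refine (MemLp.const_mul ?_ (2 * a)).add (memLp_const (b j))
    have hsum : MemLp (fun ω ↦ ∑ k ∈ s, Y k ω j) 4 P := memLp_finsetSum s fun k _ ↦ (hY k).memLp j
    by_cases hj : j ∈ A <;> simp [hj, hsum]
  empty ω := by simp [quadLinear, sqNormOn]
  cons hk ω := quadLinear_cons A a b Y hk ω
  indepFun hk := indepFun_quadLinear (fun k ↦ (hY k).aemeasurable) hind A a b hk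

lemma memLp_sum_apply (hY : ∀ k, IsIsotropic (Y k) C P) (s : Finset κ) (j : ι) :
    MemLp (fun ω ↦ ∑ k ∈ s, Y k ω j) 2 P :=
  memLp_finsetSum s fun k _ ↦ ((hY k).memLp j).mono_exponent (by norm_num)

lemma integral_sqNormOn_sum (hY : ∀ k, IsIsotropic (Y k) C P) (hind : iIndepFun Y P)
    (A : Finset ι) (s : Finset κ) :
    ∫ ω, sqNormOn A (∑ k ∈ s, Y k ω) ∂P = s.card * A.card := by
  have hcoord (j : ι) : ∫ ω, (∑ k ∈ s, Y k ω j) ^ 2 ∂P = s.card := by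
    rw [integral_sq_sum_of_iIndepFun (fun k ↦ ((hY k).memLp j).mono_exponent (by norm_num))
      (fun k ↦ (hY k).integral_eq_zero j)
      (hind.comp (fun _ y ↦ y j) fun _ ↦ measurable_pi_apply j)]
    simp [(hY _).integral_sq]
  simp only [sqNormOn, Finset.sum_apply]
  rw [integral_finsetSum _ fun j _ ↦ (memLp_sum_apply hY s j).integrable_sq]
  simp [hcoord, mul_comm]

lemma integral_quadLinearDirection_dotProduct_self (hY : ∀ k, IsIsotropic (Y k) C P)
    (hind : iIndepFun Y P) (A : Finset ι) (a : ℝ) (b : ι → ℝ) (s : Finset κ) :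
    ∫ ω, quadLinearDirection A a b Y s ω ⬝ᵥ quadLinearDirection A a b Y s ω ∂P
      = 4 * a ^ 2 * s.card * A.card + b ⬝ᵥ b := by
  have hlin : Integrable (fun ω ↦ ((4 * a) • (A : Set ι).indicator b) ⬝ᵥ ∑ k ∈ s, Y k ω) P := by
    simp only [dotProduct_sum]
    exact integrable_finsetSum s fun k _ ↦ ((hY k).memLp_dotProduct _).integrable (by norm_num)
  have hlin_mean : ∫ ω, ((4 * a) • (A : Set ι).indicator b) ⬝ᵥ ∑ k ∈ s, Y k ω ∂P = 0 := by
    simp only [dotProduct_sum]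
    rw [integral_finsetSum s fun k _ ↦ ((hY k).memLp_dotProduct _).integrable (by norm_num)]
    exact Finset.sum_eq_zero fun k _ ↦ (hY k).integral_dotProduct _
  have hquad : Integrable (fun ω ↦ 4 * a ^ 2 * sqNormOn A (∑ k ∈ s, Y k ω)) P := by
    simp only [sqNormOn, Finset.sum_apply]
    exact (integrable_finsetSum A fun j _ ↦ (memLp_sum_apply hY s j).integrable_sq).const_mul _
  simp_rw [quadLinearDirection_dotProduct_self]
  rw [integral_add (by exact hquad.add hlin) (integrable_const _), integral_add hquad hlin,
    hlin_mean, integral_const_mul, integral_sqNormOn_sum hY hind]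
  simp [mul_assoc]

lemma integral_quadLinear_sq (hY : ∀ k, IsIsotropic (Y k) C P) (hind : iIndepFun Y P)
    (A : Finset ι) (a : ℝ) (b : ι → ℝ) (s : Finset κ) :
    ∫ ω, quadLinear A a b Y s ω ^ 2 ∂P
      = 2 * a ^ 2 * s.card * (s.card - 1) * A.card + s.card * (b ⬝ᵥ b) := by
  have hM := isLinearMartingale_quadLinear hY hind A a b
  induction s using Finset.cons_induction with
  | empty => simp [hM.empty]
  | cons k s hk ih =>
    rw [hM.integral_sq_cons hY hk, ih,
      integral_quadLinearDirection_dotProduct_self hY hind, Finset.card_cons]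
    push_cast
    ring

lemma memLp_sum_sqNormOn_sub_card (hY : ∀ k, IsIsotropic (Y k) C P) (A : Finset ι)
    (s : Finset κ) : MemLp (fun ω ↦ ∑ k ∈ s, (sqNormOn A (Y k ω) - A.card)) 2 P :=
  memLp_finsetSum s fun k _ ↦ ((hY k).memLp_sqNormOn A).sub (memLp_const _)

lemma integral_sum_sqNormOn_sub_card_sq_le (hY : ∀ k, IsIsotropic (Y k) C P)
    (hind : iIndepFun Y P) (A : Finset ι) (s : Finset κ) :
    ∫ ω, (∑ k ∈ s, (sqNormOn A (Y k ω) - A.card)) ^ 2 ∂P ≤ s.card * (C * A.card ^ 2) := by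
  have hmean (k : κ) : ∫ ω, (sqNormOn A (Y k ω) - A.card) ∂P = 0 := by
    rw [integral_sub (((hY k).memLp_sqNormOn A).integrable one_le_two) (integrable_const _),
      (hY k).integral_sqNormOn]
    simp
  rw [integral_sq_sum_of_iIndepFun (X := fun k ω ↦ sqNormOn A (Y k ω) - A.card)
    (fun k ↦ ((hY k).memLp_sqNormOn A).sub (memLp_const _)) hmean
    (hind.comp (fun _ y ↦ sqNormOn A y - A.card) fun _ ↦ by fun_prop), ← nsmul_eq_mul]
  exact Finset.sum_le_card_nsmul _ _ _ fun k _ ↦ (hY k).integral_sqNormOn_sub_card_sq_le A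

lemma quadLinearDirection_dotProduct_self_sub (A : Finset ι) (a : ℝ) (b : ι → ℝ)
    (Y : κ → Ω → ι → ℝ) (s : Finset κ) (ω : Ω) :
    quadLinearDirection A a b Y s ω ⬝ᵥ quadLinearDirection A a b Y s ω
        - (4 * a ^ 2 * s.card * A.card + b ⬝ᵥ b)
      = quadLinear A (4 * a ^ 2) ((4 * a) • (A : Set ι).indicator b) Y s ω
        + 4 * a ^ 2 * ∑ k ∈ s, (sqNormOn A (Y k ω) - A.card) := by
  rw [quadLinearDirection_dotProduct_self, quadLinear, Finset.sum_sub_distrib, Finset.sum_const,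
    nsmul_eq_mul]
  ring

lemma sqNormOn_le_dotProduct_self (A : Finset ι) (x : ι → ℝ) : sqNormOn A x ≤ x ⬝ᵥ x := by
  simp only [sqNormOn, dotProduct, ← sq]
  exact Finset.sum_le_univ_sum_of_nonneg fun j ↦ sq_nonneg (x j)

lemma variance_quadLinearDirection_dotProduct_self_le (hY : ∀ k, IsIsotropic (Y k) C P)
    (hind : iIndepFun Y P) (A : Finset ι) (a : ℝ) (b : ι → ℝ) (s : Finset κ) :
    Var[fun ω ↦ quadLinearDirection A a b Y s ω ⬝ᵥ quadLinearDirection A a b Y s ω; P]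
      ≤ 64 * a ^ 4 * s.card ^ 2 * A.card + 32 * a ^ 2 * s.card * (b ⬝ᵥ b)
        + 32 * C * a ^ 4 * s.card * A.card ^ 2 := by
  set b' : ι → ℝ := (4 * a) • (A : Set ι).indicator b with hb'
  have hM := isLinearMartingale_quadLinear hY hind A a b
  have hM' := (isLinearMartingale_quadLinear hY hind A (4 * a ^ 2) b').memLp_two hY s
  have hR := memLp_sum_sqNormOn_sub_card hY A s
  have hb'_le : b' ⬝ᵥ b' ≤ 16 * a ^ 2 * (b ⬝ᵥ b) := by
    simp only [hb', smul_dotProduct, dotProduct_smul, indicator_dotProduct_indicator, smul_eq_mul]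
    nlinarith [sqNormOn_le_dotProduct_self A b, sq_nonneg a]
  have hsq := (memLp_dotProduct_of_memLp_four (hM.memLp_direction s)
    (hM.memLp_direction s)).1.aemeasurable
  rw [variance_eq_integral hsq, integral_quadLinearDirection_dotProduct_self hY hind]
  simp_rw [quadLinearDirection_dotProduct_self_sub]
  calc ∫ ω, (quadLinear A (4 * a ^ 2) b' Y s ω
        + 4 * a ^ 2 * ∑ k ∈ s, (sqNormOn A (Y k ω) - A.card)) ^ 2 ∂P
      ≤ ∫ ω, (2 * quadLinear A (4 * a ^ 2) b' Y s ω ^ 2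
        + 32 * a ^ 4 * (∑ k ∈ s, (sqNormOn A (Y k ω) - A.card)) ^ 2) ∂P := by
        refine integral_mono (hM'.add (hR.const_mul _)).integrable_sq
          ((hM'.integrable_sq.const_mul _).add (hR.integrable_sq.const_mul _)) fun ω ↦ ?_
        refine (add_sq_le).trans_eq ?_
        ring
    _ = 2 * ∫ ω, quadLinear A (4 * a ^ 2) b' Y s ω ^ 2 ∂P
        + 32 * a ^ 4 * ∫ ω, (∑ k ∈ s, (sqNormOn A (Y k ω) - A.card)) ^ 2 ∂P := by
        rw [integral_add (hM'.integrable_sq.const_mul _) (hR.integrable_sq.const_mul _),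
          integral_const_mul, integral_const_mul]
    _ ≤ 2 * (2 * (4 * a ^ 2) ^ 2 * s.card * s.card * A.card + s.card * (16 * a ^ 2 * (b ⬝ᵥ b)))
        + 32 * a ^ 4 * (s.card * (C * A.card ^ 2)) := by
        rw [integral_quadLinear_sq hY hind]
        gcongr
        · linarith
        · exact integral_sum_sqNormOn_sub_card_sq_le hY hind A s
    _ = _ := by ring

end QuadLinear

/-- The mean `Ȳ` of a finite family of random vectors. -/
noncomputable def sampleMean {Ω ι κ : Type*} [Fintype κ] (Y : κ → Ω → ι → ℝ) (ω : Ω) : ι → ℝ :=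
  (Fintype.card κ : ℝ)⁻¹ • ∑ k, Y k ω

/-- The centred quadratic statistic `n ‖Ȳ‖_A ^ 2 + 2 n ⟨G, Ȳ⟩ - #A`. The coordinates in `A` are
those outside the model, that is, `A` is the complement of `γ`. -/
noncomputable def quadStat {Ω ι κ : Type*} [Fintype ι] [Fintype κ] (A : Finset ι) (G : ι → ℝ)
    (Y : κ → Ω → ι → ℝ) (ω : Ω) : ℝ :=
  Fintype.card κ * sqNormOn A (sampleMean Y ω) + 2 * Fintype.card κ * (G ⬝ᵥ sampleMean Y ω) - A.card

/-- The asymptotic variance `2 (d + 2 n ‖G‖ ^ 2)` of `quadStat` for `n` observations, where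
`d = #A`. -/
noncomputable def quadStatVar {ι : Type*} [Fintype ι] (n : ℕ) (A : Finset ι) (G : ι → ℝ) : ℝ :=
  2 * (A.card + 2 * (n * (G ⬝ᵥ G)))

/-- Bound on `n ^ 2` times the variance of the squared norm of the direction along which a new
observation enters `α * quadStat`, in terms of `V = α ^ 2 * quadStatVar`, `x = 1 / n` and
`y = α ^ 2`. -/
def directionVarianceBound (C V x y : ℝ) : ℝ := 32 * V * y + 8 * C * V ^ 2 * x

/-- Bound on the distance between the characteristic functions of the off-diagonal part of
`α * quadStat` and of a Gaussian of variance `V = α ^ 2 * quadStatVar`, in terms of `x = 1 / n`,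
`y = α ^ 2` and `z = d / n`. -/
noncomputable def quadLinearError (C V x y z : ℝ) : ℝ :=
  √(directionVarianceBound C V x y) / 2
    + 2 * (2 * V * √x + C * √x * (4 * V ^ 2 + directionVarianceBound C V x y))
    + x * (4 * V ^ 2 + directionVarianceBound C V x y) / 8 + y * z

/-- Bound on the distance between the characteristic functions of `α * quadStat` and of a Gaussian
of variance `V`, in the parameters of `quadLinearError`. -/
noncomputable def quadStatError (C V x y z : ℝ) : ℝ := quadLinearError C V x y z + √(C * V * z / 2)

lemma tendsto_quadStatError {α : Type*} {l : Filter α} (C V : ℝ) {x y z : α → ℝ}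
    (hx : Tendsto x l (𝓝 0)) (hy : Tendsto y l (𝓝 0)) (hz : Tendsto z l (𝓝 0)) :
    Tendsto (fun i ↦ quadStatError C V (x i) (y i) (z i)) l (𝓝 0) := by
  have hcont : Continuous fun q : ℝ × ℝ × ℝ ↦ quadStatError C V q.1 q.2.1 q.2.2 := by
    unfold quadStatError quadLinearError directionVarianceBound
    fun_prop
  have h0 : quadStatError C V 0 0 0 = 0 := by
    simp [quadStatError, quadLinearError, directionVarianceBound]
  simpa [Function.comp_def, h0] using
    (hcont.tendsto (0, 0, 0)).comp (hx.prodMk_nhds (hy.prodMk_nhds hz))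

section QuadStat

variable {Ω ι κ : Type*} [Fintype ι] [Fintype κ]

lemma quadStatVar_nonneg (n : ℕ) (A : Finset ι) (G : ι → ℝ) : 0 ≤ quadStatVar n A G := by
  have : 0 ≤ G ⬝ᵥ G := dotProduct_self_star_nonneg G
  unfold quadStatVar
  positivity

lemma card_mul_gaussianStepError (C V ρ : ℝ) {n : ℝ} (hn : 0 < n) (hρ : 0 ≤ ρ) :
    n * gaussianStepError C √n⁻¹ (2 * V / n) (√ρ / n)
      = √ρ / 2 + 2 * (2 * V * √n⁻¹ + C * √n⁻¹ * (4 * V ^ 2 + ρ)) + n⁻¹ * (4 * V ^ 2 + ρ) / 8 := by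
  have hsqrt : √n ^ 2 = n := Real.sq_sqrt hn.le
  rw [gaussianStepError, div_pow √ρ, Real.sq_sqrt hρ, Real.sqrt_inv]
  have := Real.sqrt_pos.2 hn
  field_simp
  rw [hsqrt]
  field_simp
  ring

lemma mul_quadStat_eq [Nonempty κ] (A : Finset ι) (G : ι → ℝ) (Y : κ → Ω → ι → ℝ) (α : ℝ)
    (ω : Ω) :
    α * quadStat A G Y ω
      = quadLinear A (α / Fintype.card κ) ((2 * α) • G) Y Finset.univ ω
        + α / Fintype.card κ * ∑ k, (sqNormOn A (Y k ω) - A.card) := by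
  have hcard : (Fintype.card κ : ℝ) ≠ 0 := Nat.cast_ne_zero.2 Fintype.card_ne_zero
  rw [quadStat, quadLinear, sampleMean, sqNormOn_smul, dotProduct_smul, smul_dotProduct,
    Finset.sum_sub_distrib, Finset.sum_const, Finset.card_univ]
  simp only [smul_eq_mul, nsmul_eq_mul]
  field_simp
  ring

variable {mΩ : MeasurableSpace Ω} {P : Measure Ω} {Y : κ → Ω → ι → ℝ} {C : ℝ}

lemma aemeasurable_quadStat (hY : ∀ k, AEMeasurable (Y k) P) (A : Finset ι) (G : ι → ℝ) :
    AEMeasurable (quadStat A G Y) P := by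
  have hmean : AEMeasurable (fun ω ↦ ∑ k, Y k ω) P := Finset.aemeasurable_fun_sum _ fun k _ ↦ hY k
  have hstat : Measurable fun x : ι → ℝ ↦
      Fintype.card κ * sqNormOn A x + 2 * Fintype.card κ * (G ⬝ᵥ x) - A.card := by fun_prop
  exact hstat.comp_aemeasurable (hmean.const_smul (Fintype.card κ : ℝ)⁻¹)

variable [IsProbabilityMeasure P] [Nonempty κ]

lemma integral_quadLinearDirection_dotProduct_self_le (hY : ∀ k, IsIsotropic (Y k) C P)
    (hind : iIndepFun Y P) (A : Finset ι) (G : ι → ℝ) (α : ℝ) (s : Finset κ) :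
    ∫ ω, quadLinearDirection A (α / Fintype.card κ) ((2 * α) • G) Y s ω
        ⬝ᵥ quadLinearDirection A (α / Fintype.card κ) ((2 * α) • G) Y s ω ∂P
      ≤ 2 * (α ^ 2 * quadStatVar (Fintype.card κ) A G) / Fintype.card κ := by
  have hs : (s.card : ℝ) ≤ Fintype.card κ := Nat.cast_le.2 s.card_le_univ
  have hG : 0 ≤ G ⬝ᵥ G := dotProduct_self_star_nonneg G
  rw [integral_quadLinearDirection_dotProduct_self hY hind, quadStatVar]
  simp only [smul_dotProduct, dotProduct_smul, smul_eq_mul]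
  calc 4 * (α / Fintype.card κ) ^ 2 * s.card * A.card + 2 * α * (2 * α * (G ⬝ᵥ G))
      = 4 * (α / Fintype.card κ) ^ 2 * s.card * A.card + 4 * α ^ 2 * (G ⬝ᵥ G) := by ring
    _ ≤ 4 * (α / Fintype.card κ) ^ 2 * Fintype.card κ * A.card + 8 * α ^ 2 * (G ⬝ᵥ G) := by
        gcongr
        norm_num
    _ = 2 * (α ^ 2 * (2 * (A.card + 2 * (Fintype.card κ * (G ⬝ᵥ G))))) / Fintype.card κ := by
        field_simp
        ring

lemma variance_quadLinearDirection_dotProduct_self_le_div (hY : ∀ k, IsIsotropic (Y k) C P)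
    (hind : iIndepFun Y P) (A : Finset ι) (G : ι → ℝ) (α : ℝ) (s : Finset κ) :
    Var[fun ω ↦ quadLinearDirection A (α / Fintype.card κ) ((2 * α) • G) Y s ω
        ⬝ᵥ quadLinearDirection A (α / Fintype.card κ) ((2 * α) • G) Y s ω; P]
      ≤ directionVarianceBound C (α ^ 2 * quadStatVar (Fintype.card κ) A G)
          (Fintype.card κ : ℝ)⁻¹ (α ^ 2) / Fintype.card κ ^ 2 := by
  have hn : (0 : ℝ) < Fintype.card κ := Nat.cast_pos.2 Fintype.card_pos
  have hC : 0 ≤ C := (hY (Classical.arbitrary κ)).nonneg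
  have hs : (s.card : ℝ) ≤ Fintype.card κ := Nat.cast_le.2 s.card_le_univ
  have hG : 0 ≤ G ⬝ᵥ G := dotProduct_self_star_nonneg G
  have hd : (A.card : ℝ) ≤ quadStatVar (Fintype.card κ) A G / 2 := by
    rw [quadStatVar]
    nlinarith [mul_nonneg hn.le hG]
  refine (variance_quadLinearDirection_dotProduct_self_le hY hind _ _ _ s).trans ?_
  simp only [smul_dotProduct, dotProduct_smul, smul_eq_mul, directionVarianceBound]
  calc 64 * (α / Fintype.card κ) ^ 4 * s.card ^ 2 * A.card
        + 32 * (α / Fintype.card κ) ^ 2 * s.card * (2 * α * (2 * α * (G ⬝ᵥ G)))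
        + 32 * C * (α / Fintype.card κ) ^ 4 * s.card * A.card ^ 2
      = 64 * (α / Fintype.card κ) ^ 4 * s.card ^ 2 * A.card
        + 128 * α ^ 4 / Fintype.card κ ^ 2 * s.card * (G ⬝ᵥ G)
        + 32 * C * (α / Fintype.card κ) ^ 4 * s.card * A.card ^ 2 := by ring
    _ ≤ 64 * (α / Fintype.card κ) ^ 4 * Fintype.card κ ^ 2 * A.card
        + 128 * α ^ 4 / Fintype.card κ ^ 2 * Fintype.card κ * (G ⬝ᵥ G)
        + 32 * C * (α / Fintype.card κ) ^ 4 * Fintype.card κ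
          * (quadStatVar (Fintype.card κ) A G / 2) ^ 2 := by gcongr
    _ = (32 * (α ^ 2 * (2 * (A.card + 2 * (Fintype.card κ * (G ⬝ᵥ G))))) * α ^ 2
        + 8 * C * (α ^ 2 * quadStatVar (Fintype.card κ) A G) ^ 2 * (Fintype.card κ : ℝ)⁻¹)
          / Fintype.card κ ^ 2 := by
        field_simp
        ring

lemma integral_quadLinear_sq_eq (hY : ∀ k, IsIsotropic (Y k) C P) (hind : iIndepFun Y P)
    (A : Finset ι) (G : ι → ℝ) (α : ℝ) :
    ∫ ω, quadLinear A (α / Fintype.card κ) ((2 * α) • G) Y Finset.univ ω ^ 2 ∂P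
      = α ^ 2 * quadStatVar (Fintype.card κ) A G - 2 * (α ^ 2 * (A.card / Fintype.card κ)) := by
  have hn : (Fintype.card κ : ℝ) ≠ 0 := Nat.cast_ne_zero.2 Fintype.card_ne_zero
  rw [integral_quadLinear_sq hY hind, Finset.card_univ, quadStatVar]
  simp only [smul_dotProduct, dotProduct_smul, smul_eq_mul]
  field_simp
  ring

lemma norm_integral_exp_quadLinear_sub_le (hY : ∀ k, IsIsotropic (Y k) C P) (hind : iIndepFun Y P)
    (A : Finset ι) (G : ι → ℝ) (α : ℝ) :
    ‖∫ ω, Complex.exp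
        (I * quadLinear A (α / Fintype.card κ) ((2 * α) • G) Y Finset.univ ω) ∂P
        - Real.exp (-(α ^ 2 * quadStatVar (Fintype.card κ) A G / 2))‖
      ≤ quadLinearError C (α ^ 2 * quadStatVar (Fintype.card κ) A G) (Fintype.card κ : ℝ)⁻¹
          (α ^ 2) (A.card / Fintype.card κ) := by
  have hn : (0 : ℝ) < Fintype.card κ := Nat.cast_pos.2 Fintype.card_pos
  have hC : 0 ≤ C := (hY (Classical.arbitrary κ)).nonneg
  have hV_nonneg := mul_nonneg (sq_nonneg α) (quadStatVar_nonneg (Fintype.card κ) A G)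
  have hsq := integral_quadLinear_sq_eq hY hind A G α
  have hmean := integral_quadLinearDirection_dotProduct_self_le hY hind A G α
  have hvar := variance_quadLinearDirection_dotProduct_self_le_div hY hind A G α
  set V := α ^ 2 * quadStatVar (Fintype.card κ) A G
  have hρ : 0 ≤ directionVarianceBound C V (Fintype.card κ : ℝ)⁻¹ (α ^ 2) := by
    unfold directionVarianceBound
    positivity
  have hmart := (isLinearMartingale_quadLinear hY hind A _ _).norm_integral_exp_sub_le hY
    (ε := √(Fintype.card κ : ℝ)⁻¹) (r := √(directionVarianceBound C V _ _) / Fintype.card κ)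
    (by positivity) (by positivity) hmean
    (fun s ↦ by rw [div_pow, Real.sq_sqrt hρ]; exact hvar s) Finset.univ
  rw [Finset.card_univ, card_mul_gaussianStepError C V _ hn hρ] at hmart
  refine (norm_sub_le_norm_sub_add_norm_sub _ _ _).trans (add_le_add hmart ?_)
  rw [← Complex.ofReal_sub, Complex.norm_real]
  refine (abs_exp_neg_sub_exp_neg_le (by positivity) (by positivity)).trans_eq ?_
  rw [hsq, ← sub_div, sub_sub_cancel_left, abs_div, abs_neg, abs_of_nonneg (by positivity), abs_two]
  ring

lemma integral_abs_sum_sqNormOn_sub_card_le (hY : ∀ k, IsIsotropic (Y k) C P)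
    (hind : iIndepFun Y P) (A : Finset ι) (G : ι → ℝ) (α : ℝ) :
    ∫ ω, |α / Fintype.card κ * ∑ k, (sqNormOn A (Y k ω) - A.card)| ∂P
      ≤ √(C * (α ^ 2 * quadStatVar (Fintype.card κ) A G) * (A.card / Fintype.card κ) / 2) := by
  have hn : (0 : ℝ) < Fintype.card κ := Nat.cast_pos.2 Fintype.card_pos
  have hC : 0 ≤ C := (hY (Classical.arbitrary κ)).nonneg
  have hG : 0 ≤ G ⬝ᵥ G := dotProduct_self_star_nonneg G
  have hσ := quadStatVar_nonneg (Fintype.card κ) A G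
  refine integral_abs_le_of_integral_sq_le
    ((memLp_sum_sqNormOn_sub_card hY A Finset.univ).const_mul _) (Real.sqrt_nonneg _) ?_
  rw [Real.sq_sqrt (by positivity)]
  simp_rw [mul_pow]
  rw [integral_const_mul]
  calc (α / Fintype.card κ) ^ 2 * ∫ ω, (∑ k, (sqNormOn A (Y k ω) - A.card)) ^ 2 ∂P
      ≤ (α / Fintype.card κ) ^ 2 * (Fintype.card κ * (C * A.card ^ 2)) := by
        gcongr
        exact integral_sum_sqNormOn_sub_card_sq_le hY hind A Finset.univ
    _ = C * (α ^ 2 * (2 * A.card)) * (A.card / Fintype.card κ) / 2 := by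
        field_simp
    _ ≤ C * (α ^ 2 * quadStatVar (Fintype.card κ) A G) * (A.card / Fintype.card κ) / 2 := by
        gcongr
        rw [quadStatVar]
        nlinarith [mul_nonneg hn.le hG]

theorem norm_integral_exp_quadStat_sub_le (hY : ∀ k, IsIsotropic (Y k) C P) (hind : iIndepFun Y P)
    (A : Finset ι) (G : ι → ℝ) (α : ℝ) :
    ‖∫ ω, Complex.exp (I * (α * quadStat A G Y ω : ℝ)) ∂P
        - Real.exp (-(α ^ 2 * quadStatVar (Fintype.card κ) A G / 2))‖
      ≤ quadStatError C (α ^ 2 * quadStatVar (Fintype.card κ) A G) (Fintype.card κ : ℝ)⁻¹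
          (α ^ 2) (A.card / Fintype.card κ) := by
  have hR := (memLp_sum_sqNormOn_sub_card hY A Finset.univ).const_mul (α / Fintype.card κ : ℝ)
  have hM := ((isLinearMartingale_quadLinear hY hind A (α / Fintype.card κ)
    ((2 * α) • G)).memLp_two hY Finset.univ).1.aemeasurable
  have hT := (aemeasurable_quadStat (fun k ↦ (hY k).aemeasurable) A G).const_mul α
  rw [quadStatError, add_comm]
  refine (norm_sub_le_norm_sub_add_norm_sub _ _ _).trans
    (add_le_add ?_ (norm_integral_exp_quadLinear_sub_le hY hind A G α))
  rw [← integral_sub (integrable_exp_I_mul hT) (integrable_exp_I_mul hM)]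
  refine (norm_integral_le_of_norm_le (hR.integrable one_le_two).abs (ae_of_all _ fun ω ↦ ?_)).trans
    (integral_abs_sum_sqNormOn_sub_card_le hY hind A G α)
  refine (norm_exp_I_mul_sub_exp_I_mul_le _ _).trans_eq ?_
  rw [mul_quadStat_eq, add_sub_cancel_left]

end QuadStat

section Limit

variable {Ω : ℕ → Type*} {mΩ : ∀ n, MeasurableSpace (Ω n)} {P : ∀ n, Measure (Ω n)}
  [∀ n, IsProbabilityMeasure (P n)] {Ω' : Type*} {mΩ' : MeasurableSpace Ω'} {P' : Measure Ω'}
  [IsProbabilityMeasure P'] {Z : Ω' → ℝ}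

lemma tendstoInDistribution_gaussianReal_of_tendsto_integral_exp {X : ∀ n, Ω n → ℝ}
    (hX : ∀ n, AEMeasurable (X n) (P n)) (hZ : HasLaw Z (gaussianReal 0 1) P')
    (h : ∀ t : ℝ, Tendsto (fun n ↦ ∫ ω, Complex.exp (I * (t * X n ω : ℝ)) ∂(P n)) atTop
      (𝓝 (Real.exp (-(t ^ 2 / 2)) : ℂ))) :
    TendstoInDistribution X atTop Z P P' where
  forall_aemeasurable := hX
  aemeasurable_limit := hZ.aemeasurable
  tendsto := by
    refine ProbabilityMeasure.tendsto_iff_tendsto_charFun.2 fun t ↦ ?_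
    have hchar (n : ℕ) : charFun ((P n).map (X n)) t
        = ∫ ω, Complex.exp (I * (t * X n ω : ℝ)) ∂(P n) := by
      rw [charFun_apply_real, integral_map (hX n) (by fun_prop)]
      simp [mul_comm I]
    simpa [hchar, hZ.map_eq, charFun_gaussianReal, neg_div] using h t

lemma tendsto_measure_le_of_tendstoInDistribution {X : ∀ n, Ω n → ℝ}
    (h : TendstoInDistribution X atTop Z P P') {t : ℝ} (ht : P'.map Z {t} = 0) :
    Tendsto (fun n ↦ P n {ω | X n ω ≤ t}) atTop (𝓝 (P'.map Z (Set.Iic t))) := by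
  have hIic := ProbabilityMeasure.tendsto_measure_of_null_frontier_of_tendsto' h.tendsto
    (E := Set.Iic t) (by rwa [frontier_Iic])
  refine hIic.congr fun n ↦ ?_
  exact Measure.map_apply_of_aemeasurable (h.forall_aemeasurable n) measurableSet_Iic

theorem quadratic_statistic_clt_general {κ ι : ℕ → Type*} [∀ n, Fintype (κ n)]
    [∀ n, Fintype (ι n)] {C : ℝ} {Y : ∀ n, κ n → Ω n → ι n → ℝ} {A : ∀ n, Finset (ι n)}
    {G : ∀ n, ι n → ℝ} (hZ : HasLaw Z (gaussianReal 0 1) P')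
    (hY : ∀ n k, IsIsotropic (Y n k) C (P n)) (hind : ∀ n, iIndepFun (Y n) (P n))
    (hcard : Tendsto (fun n ↦ (Fintype.card (κ n) : ℝ)) atTop atTop)
    (hA : Tendsto (fun n ↦ ((A n).card : ℝ) / Fintype.card (κ n)) atTop (𝓝 0))
    (hvar : Tendsto (fun n ↦ quadStatVar (Fintype.card (κ n)) (A n) (G n)) atTop atTop) :
    TendstoInDistribution (fun n ω ↦ quadStat (A n) (G n) (Y n) ω
      / √(quadStatVar (Fintype.card (κ n)) (A n) (G n))) atTop Z P P' := by
  refine tendstoInDistribution_gaussianReal_of_tendsto_integral_exp (fun n ↦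
    (aemeasurable_quadStat (fun k ↦ (hY n k).aemeasurable) (A n) (G n)).div_const _) hZ fun t ↦ ?_
  have hscale : Tendsto (fun n ↦ (t / √(quadStatVar (Fintype.card (κ n)) (A n) (G n))) ^ 2) atTop
      (𝓝 0) := by
    simp_rw [div_pow, Real.sq_sqrt (quadStatVar_nonneg _ _ _)]
    exact hvar.const_div_atTop _
  refine tendsto_iff_norm_sub_tendsto_zero.2 (squeeze_zero' (.of_forall fun _ ↦ norm_nonneg _) ?_
    (tendsto_quadStatError C (t ^ 2) hcard.inv_tendsto_atTop hscale hA))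
  filter_upwards [hcard.eventually_gt_atTop 0, hvar.eventually_gt_atTop 0] with n hn hσ
  have : Nonempty (κ n) := Fintype.card_pos_iff.1 (Nat.cast_pos.1 hn)
  have hbound := norm_integral_exp_quadStat_sub_le (hY n) (hind n) (A n) (G n)
    (t / √(quadStatVar (Fintype.card (κ n)) (A n) (G n)))
  have hV : (t / √(quadStatVar (Fintype.card (κ n)) (A n) (G n))) ^ 2
      * quadStatVar (Fintype.card (κ n)) (A n) (G n) = t ^ 2 := by
    rw [div_pow, Real.sq_sqrt hσ.le, div_mul_cancel₀ _ hσ.ne']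
  rw [hV] at hbound
  simpa only [Pi.inv_apply, mul_div_assoc', div_mul_eq_mul_div] using hbound

end Limit

lemma isIsotropic_of_integral_mul {Ω ι : Type*} [Fintype ι] [DecidableEq ι]
    {mΩ : MeasurableSpace Ω} {P : Measure Ω} {Y : Ω → ι → ℝ} {C : ℝ} (hC : 0 ≤ C)
    (hmem : ∀ j, MemLp (fun ω ↦ Y ω j) 4 P) (hmean : ∀ j, ∫ ω, Y ω j ∂P = 0)
    (hcov : ∀ j l, ∫ ω, Y ω j * Y ω l ∂P = if j = l then 1 else 0)
    (h4 : ∀ a : ι → ℝ, a ⬝ᵥ a = 1 → ∫ ω, (a ⬝ᵥ Y ω) ^ 4 ∂P ≤ C)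
    [IsFiniteMeasure P] : IsIsotropic Y C P where
  nonneg := hC
  memLp := hmem
  integral_eq_zero := hmean
  integral_dotProduct_sq a := by
    have hmem2 (j : ι) : MemLp (fun ω ↦ Y ω j) 2 P := (hmem j).mono_exponent (by norm_num)
    have hint (j l : ι) : Integrable (fun ω ↦ a j * a l * (Y ω j * Y ω l)) P :=
      ((hmem2 j).integrable_mul (hmem2 l)).const_mul _
    have hexpand (ω : Ω) : (a ⬝ᵥ Y ω) ^ 2 = ∑ j, ∑ l, a j * a l * (Y ω j * Y ω l) := by
      simp only [dotProduct, sq, Finset.sum_mul_sum, mul_assoc, mul_left_comm (Y ω _)]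
    simp_rw [hexpand]
    rw [integral_finsetSum _ fun j _ ↦ integrable_finsetSum _ fun l _ ↦ hint j l]
    refine Finset.sum_congr rfl fun j _ ↦ ?_
    rw [integral_finsetSum _ fun l _ ↦ hint j l]
    simp [integral_const_mul, hcov]
  integral_dotProduct_pow_four_le a := by
    have ha : 0 ≤ a ⬝ᵥ a := dotProduct_self_star_nonneg a
    rcases ha.eq_or_lt with h0 | hpos
    · simp [dotProduct_self_eq_zero.1 h0.symm]
    have hsqrt : √(a ⬝ᵥ a) ^ 2 = a ⬝ᵥ a := Real.sq_sqrt ha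
    have hunit := h4 ((√(a ⬝ᵥ a))⁻¹ • a) (by
      rw [smul_dotProduct, dotProduct_smul, smul_smul, smul_eq_mul, ← sq, inv_pow, hsqrt,
        inv_mul_cancel₀ hpos.ne'])
    simp_rw [smul_dotProduct, smul_eq_mul, mul_pow] at hunit
    rwa [integral_const_mul, inv_pow, inv_mul_le_iff₀ (by positivity),
      show √(a ⬝ᵥ a) ^ 4 = (√(a ⬝ᵥ a) ^ 2) ^ 2 by ring, hsqrt, mul_comm] at hunit

lemma memLp_of_integrable_pow {Ω : Type*} {mΩ : MeasurableSpace Ω} {P : Measure Ω} {X : Ω → ℝ}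
    {n : ℕ} (hn : Even n) (hn0 : n ≠ 0) (hX : AEStronglyMeasurable X P)
    (h : Integrable (fun ω ↦ X ω ^ n) P) : MemLp X n P := by
  rw [← integrable_norm_rpow_iff hX (by simpa) (by simp)]
  simpa [hn.pow_abs] using h

lemma tendsto_div_of_tendsto_div_rpow {p : ℕ → ℝ} (hp : ∀ n, 0 ≤ p n) {s : ℝ} (hs : s ≤ 1)
    (h : Tendsto (fun n : ℕ ↦ p n / (n : ℝ) ^ s) atTop (𝓝 0)) :
    Tendsto (fun n : ℕ ↦ p n / n) atTop (𝓝 0) := by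
  refine squeeze_zero' (.of_forall fun n ↦ div_nonneg (hp n) n.cast_nonneg) ?_ h
  filter_upwards [eventually_ge_atTop 1] with n hn
  have hn' : (1 : ℝ) ≤ n := Nat.one_le_cast.2 hn
  have hpow : (n : ℝ) ^ s ≤ n := by simpa using Real.rpow_le_rpow_of_exponent_le hn' hs
  exact div_le_div_of_nonneg_left (hp n) (by positivity) hpow

lemma tendsto_quadStatVar_atTop {α : Type*} {l : Filter α} {ι : α → Type*} [∀ i, Fintype (ι i)]
    {n : α → ℕ} {A : ∀ i, Finset (ι i)} (G : ∀ i, ι i → ℝ)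
    (hA : Tendsto (fun i ↦ (A i).card) l atTop) :
    Tendsto (fun i ↦ quadStatVar (n i) (A i) (G i)) l atTop := by
  refine tendsto_atTop_mono (fun i ↦ ?_) (tendsto_natCast_atTop_atTop.comp hA)
  have hG : 0 ≤ n i * (G i ⬝ᵥ G i) :=
    mul_nonneg (n i).cast_nonneg (dotProduct_self_star_nonneg (G i))
  rw [Function.comp_apply, quadStatVar]
  linarith [(A i).card.cast_nonneg (α := ℝ)]

section Compl

variable {ι : Type*} [Fintype ι] [DecidableEq ι]

lemma natCast_card_compl (s : Finset ι) : (sᶜ.card : ℝ) = Fintype.card ι - s.card := by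
  rw [Finset.card_compl, Nat.cast_sub s.card_le_univ]

lemma sqNormOn_compl (s : Finset ι) (x : ι → ℝ) :
    sqNormOn sᶜ x = ∑ j, x j ^ 2 - ∑ j, (if j ∈ s then x j else 0) ^ 2 := by
  rw [← Finset.sum_add_sum_compl s, sqNormOn]
  simp [ite_pow]

lemma quadStat_compl {Ω κ : Type*} [Fintype κ] (s : Finset ι) (G : ι → ℝ) (Y : κ → Ω → ι → ℝ)
    (ω : Ω) :
    quadStat sᶜ G Y ω
      = Fintype.card κ * (∑ j, sampleMean Y ω j ^ 2
          - ∑ j, (if j ∈ s then sampleMean Y ω j else 0) ^ 2)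
        + 2 * Fintype.card κ * ∑ j, G j * sampleMean Y ω j - (Fintype.card ι - s.card) := by
  rw [quadStat, sqNormOn_compl, natCast_card_compl, dotProduct]

lemma quadStatVar_compl (n : ℕ) (s : Finset ι) (G : ι → ℝ) :
    quadStatVar n sᶜ G = 2 * ((Fintype.card ι - s.card) + 2 * (n * ∑ j, G j ^ 2)) := by
  simp only [quadStatVar, natCast_card_compl, dotProduct, sq]

end Compl

/-- **Lemma 3**: martingale CLT for the quadratic statistic in the likelihood-ratio
expansion. For triangular arrays of i.i.d. mean-zero identity-covariance vectors in
`ℝ^{p_n}` with bounded sixth coordinate moments and bounded third/fourth directional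
moments, `p_n → ∞`, `p_n = o(n^{2/3})`, models `γ_n` with `d_n = p_n − |γ_n| → ∞` and
vectors `G_n` with `c√(p_n/n) ≤ ‖G_n‖ ≤ C√(p_n/n)`, the standardized statistic
`(n(‖Ȳ‖² − ‖Ȳ_{γ_n}‖²) + 2n G_nᵀȲ − d_n)/√(2(d_n + 2δ_n))`, `δ_n = n‖G_n‖²`,
converges in distribution to `N(0,1)`. -/
theorem quadratic_statistic_clt
    (C c : ℝ) (hC : 0 < C) (hc : 0 < c)
    (p : ℕ → ℕ)
    (hp_top : Tendsto (fun n => p n) atTop atTop)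
    (hpo : Tendsto (fun n => (p n : ℝ) / (n : ℝ) ^ ((2 : ℝ) / 3)) atTop (nhds 0))
    (Ω : ℕ → Type*) (mΩ : ∀ n, MeasurableSpace (Ω n))
    (P : ∀ n, Measure (Ω n)) (hP : ∀ n, IsProbabilityMeasure (P n))
    (Y : ∀ n, Fin n → Ω n → (Fin (p n) → ℝ))
    (hmeas : ∀ n i, Measurable (Y n i))
    (hindep : ∀ n, iIndepFun (Y n) (P n))
    (hident : ∀ n i i', Measure.map (Y n i) (P n) = Measure.map (Y n i') (P n))
    -- mean zero and identity covariance
    (hmean : ∀ n i j, ∫ ω, Y n i ω j ∂(P n) = 0)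
    (hcov : ∀ n i j l, ∫ ω, Y n i ω j * Y n i ω l ∂(P n) = if j = l then (1 : ℝ) else 0)
    -- bounded sixth coordinate moments
    (hm6int : ∀ n i j, Integrable (fun ω => (Y n i ω j) ^ 6) (P n))
    (hm6 : ∀ n i j, ∫ ω, (Y n i ω j) ^ 6 ∂(P n) ≤ C)
    -- bounded third and fourth directional moments, uniformly over unit vectors
    (hm3 : ∀ n i (a : Fin (p n) → ℝ), (∑ j, (a j) ^ 2) = 1 →
      |∫ ω, (∑ j, a j * Y n i ω j) ^ 3 ∂(P n)| ≤ C)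
    (hm4 : ∀ n i (a : Fin (p n) → ℝ), (∑ j, (a j) ^ 2) = 1 →
      ∫ ω, (∑ j, a j * Y n i ω j) ^ 4 ∂(P n) ≤ C)
    -- models with `d_n = p_n − |γ_n| → ∞`
    (γ : ∀ n, Finset (Fin (p n)))
    (hd_top : Tendsto (fun n => p n - (γ n).card) atTop atTop)
    -- vectors `G_n` with `c√(p_n/n) ≤ ‖G_n‖ ≤ C√(p_n/n)`
    (G : ∀ n, Fin (p n) → ℝ)
    (hG : ∀ n, 0 < n →
      c * Real.sqrt ((p n : ℝ) / n) ≤ Real.sqrt (∑ j, (G n j) ^ 2) ∧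
      Real.sqrt (∑ j, (G n j) ^ 2) ≤ C * Real.sqrt ((p n : ℝ) / n))
    -- the sample mean, its restriction to `γ_n`, and the standardized statistic
    (Ybar : ∀ n, Ω n → (Fin (p n) → ℝ))
    (hYbar : ∀ n ω j, Ybar n ω j = (∑ i : Fin n, Y n i ω j) / n)
    (δ : ℕ → ℝ) (hδ : ∀ n, δ n = n * ∑ j, (G n j) ^ 2)
    (W : ∀ n, Ω n → ℝ)
    (hW : ∀ n ω, W n ω =
      ((n : ℝ) * ((∑ j, (Ybar n ω j) ^ 2) - ∑ j, (if j ∈ γ n then Ybar n ω j else 0) ^ 2)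
          + 2 * n * (∑ j, G n j * Ybar n ω j)
          - ((p n : ℝ) - (γ n).card))
        / Real.sqrt (2 * (((p n : ℝ) - (γ n).card) + 2 * δ n))) :
    ∀ t : ℝ,
      Tendsto (fun n => ((P n) {ω | W n ω ≤ t}).toReal) atTop
        (nhds ((gaussianReal 0 1 (Set.Iic t)).toReal)) := by
  intro t
  have hY (n : ℕ) (i : Fin n) : IsIsotropic (Y n i) C (P n) :=
    isIsotropic_of_integral_mul hC.le (fun j ↦ (memLp_of_integrable_pow (n := 6) (by decide)
      (by decide) (by fun_prop) (hm6int n i j)).mono_exponent (by norm_num)) (hmean n i) (hcov n i)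
      fun a ha ↦ hm4 n i a (by simpa [dotProduct, sq] using ha)
  have hA : Tendsto (fun n ↦ ((γ n)ᶜ.card : ℝ) / n) atTop (𝓝 0) :=
    squeeze_zero (fun n ↦ by positivity) (fun n ↦ by gcongr; simpa using (γ n)ᶜ.card_le_univ)
      (tendsto_div_of_tendsto_div_rpow (fun n ↦ (p n).cast_nonneg) (by norm_num) hpo)
  have hvar : Tendsto (fun n ↦ quadStatVar n (γ n)ᶜ (G n)) atTop atTop :=
    tendsto_quadStatVar_atTop G (by simpa [Finset.card_compl] using hd_top)
  have hW_eq (n : ℕ) (ω : Ω n) :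
      W n ω = quadStat (γ n)ᶜ (G n) (Y n) ω / √(quadStatVar n (γ n)ᶜ (G n)) := by
    have hmean_eq : Ybar n ω = sampleMean (Y n) ω := by
      ext j
      simp [sampleMean, hYbar, div_eq_inv_mul]
    simp [hW, hδ, hmean_eq, quadStat_compl, quadStatVar_compl]
  have hclt := quadratic_statistic_clt_general (HasLaw.id (μ := gaussianReal 0 1)) hY hindep
    (by simpa using tendsto_natCast_atTop_atTop) (by simpa using hA) (by simpa using hvar)
  have : NullSingletonClass (gaussianReal 0 1) := nullSingletonClass_gaussianReal one_ne_zero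
  have hcdf := tendsto_measure_le_of_tendstoInDistribution hclt (t := t) (by simp)
  simpa [hW_eq, Function.comp_def] using (ENNReal.tendsto_toReal (measure_ne_top _ _)).comp hcdf
end

section
/- Let Y₁ and Y₂ be random variables on a probability space and m > 0, 0 ≤ α ≤ 1 constants such that almost surely 0 ≤ Y₁ ≤ m and 0 ≤ Y₂ ≤ m, and E[Y₂] ≥ m(1 − α). Then for every 0 < Δ ≤ 1/2, P( Y₁/(Y₁ + Y₂) ≥ 1/2 + Δ ) ≤ α(1 + 2Δ)/(4Δ), where the ratio is interpreted as 0 on the event Y₁ + Y₂ = 0. -/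
open MeasureTheory

/-!
If `Y₁ / (Y₁ + Y₂) ≥ t := 1 / 2 + Δ`, then `Y₂ ≤ (1 - t) / t * Y₁ ≤ (1 - t) / t * m`, so the
deficit `m - Y₂`, which is nonnegative with mean at most `m * α`, is at least
`m * (1 - (1 - t) / t) = m * (4 * Δ / (1 + 2 * Δ))`. Markov's inequality bounds the probability.
-/

theorem le_one_sub_div_mul_of_le_div_add {K : Type*} [Field K] [LinearOrder K]
    [IsStrictOrderedRing K] {t x y : K} (ht : 0 < t) (hx : 0 ≤ x) (h : t ≤ x / (x + y)) :
    y ≤ (1 - t) / t * x := by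
  have hxy : 0 < x + y :=
    ((div_pos_iff.1 (ht.trans_le h)).resolve_right fun hneg ↦ hneg.1.not_ge hx).2
  have hmul : t * (x + y) ≤ x := (le_div_iff₀ hxy).1 h
  rw [div_mul_eq_mul_div, le_div_iff₀ ht]
  linarith

section Measure

variable {Ω : Type*} {mΩ : MeasurableSpace Ω} {μ : Measure Ω}

theorem measure_ge_le_ofReal_integral_div {f : Ω → ℝ} {ε : ℝ} (hf : 0 ≤ᵐ[μ] f)
    (hint : Integrable f μ) (hε : 0 < ε) :
    μ {ω | ε ≤ f ω} ≤ ENNReal.ofReal ((∫ ω, f ω ∂μ) / ε) := by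
  rw [← ofReal_measureReal (hint.measure_ge_lt_top hε).ne]
  exact ENNReal.ofReal_le_ofReal <|
    (le_div_iff₀' hε).2 (mul_meas_ge_le_integral_of_nonneg hf hint ε)

theorem measure_le_le_ofReal_integral_const_sub_div {Y : Ω → ℝ} {b c : ℝ}
    (hY : ∀ᵐ ω ∂μ, Y ω ≤ b) (hint : Integrable (fun ω ↦ b - Y ω) μ) (hcb : c < b) :
    μ {ω | Y ω ≤ c} ≤ ENNReal.ofReal ((∫ ω, (b - Y ω) ∂μ) / (b - c)) := by
  simpa only [sub_le_sub_iff_left] using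
    measure_ge_le_ofReal_integral_div (hY.mono fun _ ↦ sub_nonneg.2) hint (sub_pos.2 hcb)

theorem measure_le_div_add_le_measure_le {Y₁ Y₂ : Ω → ℝ} {t a : ℝ} (ht₀ : 0 < t) (ht₁ : t ≤ 1)
    (hY₁ : ∀ᵐ ω ∂μ, 0 ≤ Y₁ ω ∧ Y₁ ω ≤ a) :
    μ {ω | t ≤ Y₁ ω / (Y₁ ω + Y₂ ω)} ≤ μ {ω | Y₂ ω ≤ (1 - t) / t * a} := by
  refine measure_mono_ae ?_
  filter_upwards [hY₁] with ω ⟨hnonneg, hle⟩ hratio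
  have hcoeff : 0 ≤ (1 - t) / t := div_nonneg (sub_nonneg.2 ht₁) ht₀.le
  exact (le_one_sub_div_mul_of_le_div_add ht₀ hnonneg hratio).trans
    (mul_le_mul_of_nonneg_left hle hcoeff)

theorem integral_const_sub_of_isProbabilityMeasure [IsProbabilityMeasure μ] {f : Ω → ℝ}
    (hf : Integrable f μ) (c : ℝ) : ∫ ω, (c - f ω) ∂μ = c - ∫ ω, f ω ∂μ := by
  simp [integral_sub (integrable_const c) hf]

theorem ratio_markov_bound_general {Y₁ Y₂ : Ω → ℝ} {m α : ℝ} (hm : 0 < m)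
    (hY₁ : ∀ᵐ ω ∂μ, 0 ≤ Y₁ ω ∧ Y₁ ω ≤ m) (hY₂ : ∀ᵐ ω ∂μ, Y₂ ω ≤ m)
    (hint : Integrable (fun ω ↦ m - Y₂ ω) μ) (hmean : ∫ ω, (m - Y₂ ω) ∂μ ≤ m * α)
    (Δ : ℝ) (hΔ₀ : 0 < Δ) (hΔ : Δ ≤ 1 / 2) :
    μ {ω | 1 / 2 + Δ ≤ Y₁ ω / (Y₁ ω + Y₂ ω)}
      ≤ ENNReal.ofReal (α * (1 + 2 * Δ) / (4 * Δ)) := by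
  set t := 1 / 2 + Δ with ht
  set c := (1 - t) / t * m with hc
  have hgap : m - c = m * (4 * Δ / (1 + 2 * Δ)) := by
    rw [hc, ht]
    field_simp
    ring
  have hgap_pos : 0 < m - c := by
    rw [hgap]
    positivity
  calc
    μ {ω | t ≤ Y₁ ω / (Y₁ ω + Y₂ ω)} ≤ μ {ω | Y₂ ω ≤ c} :=
      measure_le_div_add_le_measure_le (by positivity) (by linarith) hY₁
    _ ≤ ENNReal.ofReal ((∫ ω, (m - Y₂ ω) ∂μ) / (m - c)) :=
      measure_le_le_ofReal_integral_const_sub_div hY₂ hint (sub_pos.1 hgap_pos)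
    _ ≤ ENNReal.ofReal (m * α / (m - c)) := by gcongr
    _ = ENNReal.ofReal (α * (1 + 2 * Δ) / (4 * Δ)) := by
      rw [hgap, mul_div_mul_left _ _ hm.ne', div_div_eq_mul_div]

end Measure

/-- **Markov-inequality step in the proof of Theorem 4 (ii)**: if `0 ≤ Y₁ ≤ m` and
`0 ≤ Y₂ ≤ m` almost surely and `E[Y₂] ≥ m(1-α)`, then for any `0 < Δ ≤ 1/2`,
`P(Y₁/(Y₁+Y₂) ≥ 1/2 + Δ) ≤ α(1+2Δ)/(4Δ)` (the ratio being `0` when `Y₁+Y₂ = 0`,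
which is Lean's convention for division by zero). -/
theorem ratio_markov_bound
    (Ω : Type*) (mΩ : MeasurableSpace Ω) (P : Measure Ω) (hP : IsProbabilityMeasure P)
    (Y₁ Y₂ : Ω → ℝ) (hY₁ : Measurable Y₁) (hY₂ : Measurable Y₂)
    (m : ℝ) (hm : 0 < m) (α : ℝ) (hα0 : 0 ≤ α) (hα1 : α ≤ 1)
    (hb₁ : ∀ᵐ ω ∂P, 0 ≤ Y₁ ω ∧ Y₁ ω ≤ m)
    (hb₂ : ∀ᵐ ω ∂P, 0 ≤ Y₂ ω ∧ Y₂ ω ≤ m)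
    (hmean : m * (1 - α) ≤ ∫ ω, Y₂ ω ∂P) :
    ∀ Δ : ℝ, 0 < Δ → Δ ≤ 1 / 2 →
      P {ω | 1 / 2 + Δ ≤ Y₁ ω / (Y₁ ω + Y₂ ω)}
        ≤ ENNReal.ofReal (α * (1 + 2 * Δ) / (4 * Δ)) := by
  have hint : Integrable Y₂ P := .of_mem_Icc 0 m hY₂.aemeasurable hb₂
  exact ratio_markov_bound_general hm hb₁ (hb₂.mono fun _ h ↦ h.2) ((integrable_const m).sub hint)
    (by rw [integral_const_sub_of_isProbabilityMeasure hint]; linarith)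
end
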